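/- arXiv:1508.02205 — 11 statements merged into one kernel-verified Lean document; each statement's English description precedes it below -/
import Mathlib

section
/- Let q be a real number with 0 < q < 1 and let c be a real number with c > −2. Then for every z > 0 the set Z_z = {z·q^(2n) : n ∈ ℤ} is an irreducible c-set. -/
/-!
Since `τ(y) ≥ 2` for every `y > 0`, the hypothesis `c > -2` makes every positive real strictly
`c_ε`-adapted for both signs (`pos_add_tau`). Hence the closure conditions of a `c`-set are
unconditional, and every `c`-set is stable under multiplication by `q ^ (2 * n)` for all integers
`n` (`IsCSet.mul_zpow_mem`). So `Z_z` is a `c`-set, and any `c`-set meeting it contains `z`;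
two `c`-sets contained in `Z_z` are therefore never disjoint.
-/


open Classical

/-- τ(y) = y + y⁻¹. -/
noncomputable def tau (y : ℝ) : ℝ := y + y⁻¹

/-- `Z` is a `c`-set (relative to the parameter `q`): a nonempty set of positive reals,
all of whose elements are `c`-adapted, and which is closed under the shifts
`z ↦ q^(-2ε) z` whenever `z` is strictly `c_ε`-adapted. -/
def IsCSet (q c : ℝ) (Z : Set ℝ) : Prop :=
  Z.Nonempty ∧ (∀ z ∈ Z, 0 < z) ∧
  (∀ z ∈ Z, 0 ≤ c + tau (q * z) ∧ 0 ≤ c + tau (q⁻¹ * z)) ∧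
  (∀ z ∈ Z, 0 < c + tau (q * z) → q ^ (2 : ℤ) * z ∈ Z) ∧
  (∀ z ∈ Z, 0 < c + tau (q⁻¹ * z) → q ^ (-2 : ℤ) * z ∈ Z)

/-- A `c`-set is irreducible if it cannot be written as the union of two disjoint `c`-sets. -/
def IsIrreducibleCSet (q c : ℝ) (Z : Set ℝ) : Prop :=
  IsCSet q c Z ∧
  ¬ ∃ Z₁ Z₂ : Set ℝ, IsCSet q c Z₁ ∧ IsCSet q c Z₂ ∧ Disjoint Z₁ Z₂ ∧ Z = Z₁ ∪ Z₂

/-- `Z_z = {z·q^(2n) : n ∈ ℤ}`. -/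
def Zfull (q z : ℝ) : Set ℝ := {x | ∃ n : ℤ, x = z * q ^ (2 * n)}

/-- `Z_z⁺ = {z·q^(2n) : n ∈ ℕ}`. -/
def Zplus (q z : ℝ) : Set ℝ := {x | ∃ n : ℕ, x = z * q ^ (2 * n)}

/-- `Z_z⁻ = {z·q^(−2n) : n ∈ ℕ}`. -/
def Zminus (q z : ℝ) : Set ℝ := {x | ∃ n : ℕ, x = z * q ^ (-(2 * n : ℤ))}

lemma pos_add_tau {c : ℝ} (hc : -2 < c) {y : ℝ} (hy : 0 < y) : 0 < c + tau y := by
  have h : 2 ≤ y + y⁻¹ := by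
    have e : y + y⁻¹ - 2 = (y - 1) ^ 2 / y := by field_simp; ring
    have : 0 ≤ (y - 1) ^ 2 / y := by positivity
    linarith
  unfold tau
  linarith

lemma IsCSet.mul_zpow_mem {q c : ℝ} (hq : 0 < q) (hc : -2 < c) {Z : Set ℝ} (hZ : IsCSet q c Z)
    {x : ℝ} (hx : x ∈ Z) (n : ℤ) : x * q ^ (2 * n) ∈ Z := by
  obtain ⟨-, hpos, -, hdown, hup⟩ := hZ
  induction n using Int.induction_on with
  | zero => simpa using hx
  | succ k ih =>
    have h := hdown _ ih (pos_add_tau hc (mul_pos hq (hpos _ ih)))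
    rwa [mul_left_comm, ← zpow_add₀ hq.ne', show (2 : ℤ) + 2 * k = 2 * (k + 1) by ring] at h
  | pred k ih =>
    have h := hup _ ih (pos_add_tau hc (mul_pos (inv_pos.2 hq) (hpos _ ih)))
    rwa [mul_left_comm, ← zpow_add₀ hq.ne', show (-2 : ℤ) + 2 * -k = 2 * (-k - 1) by ring] at h

lemma isCSet_Zfull {q c : ℝ} (hq : 0 < q) (hc : -2 < c) {z : ℝ} (hz : 0 < z) :
    IsCSet q c (Zfull q z) := by
  have hpos : ∀ x ∈ Zfull q z, 0 < x := by
    rintro x ⟨n, rfl⟩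
    positivity
  refine ⟨⟨z, 0, by simp⟩, hpos, fun x hx => ⟨?_, ?_⟩, ?_, ?_⟩
  · exact (pos_add_tau hc (mul_pos hq (hpos x hx))).le
  · exact (pos_add_tau hc (mul_pos (inv_pos.2 hq) (hpos x hx))).le
  · rintro x ⟨n, rfl⟩ -
    exact ⟨n + 1, by rw [mul_left_comm, ← zpow_add₀ hq.ne']; ring_nf⟩
  · rintro x ⟨n, rfl⟩ -
    exact ⟨n - 1, by rw [mul_left_comm, ← zpow_add₀ hq.ne']; ring_nf⟩

lemma IsCSet.mem_of_subset_Zfull {q c : ℝ} (hq : 0 < q) (hc : -2 < c) {z : ℝ} {Z : Set ℝ}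
    (hZ : IsCSet q c Z) (hsub : Z ⊆ Zfull q z) : z ∈ Z := by
  obtain ⟨x, hx⟩ := hZ.1
  obtain ⟨n, rfl⟩ := hsub hx
  have h := hZ.mul_zpow_mem hq hc hx (-n)
  rwa [mul_assoc, ← zpow_add₀ hq.ne', show 2 * n + 2 * -n = 0 by ring, zpow_zero, mul_one] at h

theorem strange_principal_series_irreducible (q c : ℝ) (hq0 : 0 < q) (hq1 : q < 1)
    (hc : -2 < c) (z : ℝ) (hz : 0 < z) :
    IsIrreducibleCSet q c (Zfull q z) := by
  refine ⟨isCSet_Zfull hq0 hc hz, ?_⟩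
  rintro ⟨Z₁, Z₂, h₁, h₂, hdisj, hunion⟩
  exact Set.disjoint_left.1 hdisj
    (h₁.mem_of_subset_Zfull hq0 hc (hunion ▸ Set.subset_union_left))
    (h₂.mem_of_subset_Zfull hq0 hc (hunion ▸ Set.subset_union_right))
end

section
/- Let q be a real number with 0 < q < 1 and let c be a real number with c > −2. Then every irreducible c-set equals Z_z = {z·q^(2n) : n ∈ ℤ} for a unique z with q ≤ z < q⁻¹. -/
/-!
For `y > 0` one has `τ(y) ≥ 2`, so `c > -2` makes every positive real strictly `c_ε`-adapted for
both signs. Hence a nonempty set of positive reals is a `c`-set exactly when it is stable under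
`x ↦ q² x` and `x ↦ q⁻² x`, that is, when it is a union of orbits `Zfull q w`
(`isCSet_iff_of_neg_two_lt`). An orbit contained in an irreducible `c`-set `Z` must be all of `Z`,
since otherwise its complement in `Z` would be a second `c`-set. Finally, the half-open interval
`[q, q⁻¹)` has endpoint ratio `q⁻²`, so it is a fundamental domain for multiplication by powers
of `q²` and meets each orbit exactly once.
-/

open Classical

lemma two_le_tau {y : ℝ} (hy : 0 < y) : 2 ≤ tau y := by
  have h : tau y - 2 = (y - 1) ^ 2 / y := by
    unfold tau
    field_simp
    ring
  have : 0 ≤ (y - 1) ^ 2 / y := by positivity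
  linarith

/-- When `c > -2` all adaptedness conditions hold strictly, and `c`-sets are just the nonempty sets
of positive reals stable under multiplication by `q²` and `q⁻²`. -/
lemma isCSet_iff_of_neg_two_lt {q c : ℝ} (hq0 : 0 < q) (hc : -2 < c) (Z : Set ℝ) :
    IsCSet q c Z ↔ Z.Nonempty ∧ (∀ z ∈ Z, 0 < z) ∧
      (∀ z ∈ Z, q ^ (2 : ℤ) * z ∈ Z) ∧ (∀ z ∈ Z, q ^ (-2 : ℤ) * z ∈ Z) := by
  have h1 : ∀ z : ℝ, 0 < z → 0 < c + tau (q * z) := fun z hz => by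
    linarith [two_le_tau (mul_pos hq0 hz)]
  have h2 : ∀ z : ℝ, 0 < z → 0 < c + tau (q⁻¹ * z) := fun z hz => by
    linarith [two_le_tau (mul_pos (inv_pos.2 hq0) hz)]
  constructor
  · rintro ⟨hne, hpos, -, hu, hd⟩
    exact ⟨hne, hpos, fun z hz => hu z hz (h1 z (hpos z hz)),
      fun z hz => hd z hz (h2 z (hpos z hz))⟩
  · rintro ⟨hne, hpos, hu, hd⟩
    exact ⟨hne, hpos, fun z hz => ⟨(h1 z (hpos z hz)).le, (h2 z (hpos z hz)).le⟩,
      fun z hz _ => hu z hz, fun z hz _ => hd z hz⟩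

lemma mem_Zfull_self (q w : ℝ) : w ∈ Zfull q w := ⟨0, by simp⟩

lemma Zfull_mul_zpow {q : ℝ} (hq0 : 0 < q) (w : ℝ) (n : ℤ) :
    Zfull q (w * q ^ (2 * n)) = Zfull q w := by
  ext x
  constructor
  · rintro ⟨m, rfl⟩
    exact ⟨n + m, by rw [mul_assoc, ← zpow_add₀ hq0.ne', mul_add]⟩
  · rintro ⟨m, rfl⟩
    refine ⟨m - n, ?_⟩
    rw [mul_assoc, ← zpow_add₀ hq0.ne']
    congr 2
    ring

lemma zpow_two_mul_mem_Zfull_iff {q : ℝ} (hq0 : 0 < q) (w x : ℝ) (k : ℤ) :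
    q ^ (2 * k) * x ∈ Zfull q w ↔ x ∈ Zfull q w := by
  constructor
  · rintro ⟨n, hn⟩
    refine ⟨n - k, ?_⟩
    rw [mul_sub, zpow_sub₀ hq0.ne', ← mul_div_assoc, ← hn]
    have := zpow_ne_zero (2 * k) hq0.ne'
    field_simp
  · rintro ⟨n, rfl⟩
    exact ⟨k + n, by rw [mul_add, zpow_add₀ hq0.ne']; ring⟩

/-- An irreducible `c`-set with `c > -2` is the orbit of any of its elements. -/
lemma IsIrreducibleCSet.eq_Zfull {q c : ℝ} (hq0 : 0 < q) (hc : -2 < c) {Z : Set ℝ}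
    (hZ : IsIrreducibleCSet q c Z) {w : ℝ} (hw : w ∈ Z) : Z = Zfull q w := by
  obtain ⟨hZ, hirr⟩ := hZ
  obtain ⟨-, hpos, hu, hd⟩ := (isCSet_iff_of_neg_two_lt hq0 hc Z).1 hZ
  have hup : ∀ x, q ^ (2 : ℤ) * x ∈ Zfull q w ↔ x ∈ Zfull q w := fun x => by
    simpa using zpow_two_mul_mem_Zfull_iff hq0 w x 1
  have hdn : ∀ x, q ^ (-2 : ℤ) * x ∈ Zfull q w ↔ x ∈ Zfull q w := fun x => by
    simpa using zpow_two_mul_mem_Zfull_iff hq0 w x (-1)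
  have hsub : Zfull q w ⊆ Z := by
    rintro _ ⟨n, rfl⟩
    induction n with
    | zero => simpa using hw
    | succ n ih =>
      have := hu _ ih
      rwa [mul_left_comm, ← zpow_add₀ hq0.ne',
        show (2 : ℤ) + 2 * n = 2 * (n + 1) by ring] at this
    | pred n ih =>
      have := hd _ ih
      rwa [mul_left_comm, ← zpow_add₀ hq0.ne',
        show (-2 : ℤ) + 2 * -n = 2 * (-n - 1) by ring] at this
  by_contra hne
  have hdiff : (Z \ Zfull q w).Nonempty :=
    Set.sdiff_nonempty.2 fun h => hne (h.antisymm hsub)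
  refine hirr ⟨Zfull q w, Z \ Zfull q w, ?_, ?_, Set.disjoint_sdiff_right,
    (Set.union_sdiff_cancel hsub).symm⟩
  · exact (isCSet_iff_of_neg_two_lt hq0 hc _).2 ⟨⟨w, mem_Zfull_self q w⟩,
      fun z hz => hpos z (hsub hz), fun z hz => (hup z).2 hz, fun z hz => (hdn z).2 hz⟩
  · exact (isCSet_iff_of_neg_two_lt hq0 hc _).2 ⟨hdiff, fun z hz => hpos z hz.1,
      fun z hz => ⟨hu z hz.1, fun h => hz.2 ((hup z).1 h)⟩,
      fun z hz => ⟨hd z hz.1, fun h => hz.2 ((hdn z).1 h)⟩⟩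

/-- The interval `[q, q⁻¹)` meets every orbit of positive reals. -/
lemma exists_mul_zpow_mem_Ico {q w : ℝ} (hq0 : 0 < q) (hq1 : q < 1) (hw : 0 < w) :
    ∃ n : ℤ, q ≤ w * q ^ (2 * n) ∧ w * q ^ (2 * n) < q⁻¹ := by
  have hy : 1 < (q ^ 2)⁻¹ := (one_lt_inv₀ (by positivity)).2 (by nlinarith)
  -- `n` is determined by `q ^ (-2 * n) ≤ w / q < q ^ (-2 * (n + 1))`.
  obtain ⟨n, h1, h2⟩ := exists_mem_Ico_zpow (div_pos hw hq0) hy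
  have hp : 0 < q ^ (2 * n) := zpow_pos hq0 _
  have e : (q ^ 2)⁻¹ ^ n = (q ^ (2 * n))⁻¹ := by
    rw [inv_zpow, zpow_mul]
    norm_cast
  rw [zpow_add_one₀ (by positivity), e] at h2
  rw [e] at h1
  refine ⟨n, ?_, ?_⟩
  · field_simp at h1
    linarith
  · field_simp at h2 ⊢
    linarith

/-- A positive power of `q²` moves every point below `q⁻¹` to a point below `q`, so distinct points
of one orbit cannot both lie in `[q, q⁻¹)`. -/
lemma eq_zero_of_mul_zpow_mem_Ico {q z : ℝ} (hq0 : 0 < q) (hq1 : q < 1) (hz : z < q⁻¹)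
    {n : ℤ} (hn : 0 ≤ n) (h : q ≤ z * q ^ (2 * n)) : n = 0 := by
  by_contra h0
  have hle : q ^ (2 * n) ≤ q ^ (2 : ℤ) := zpow_le_zpow_right_of_le_one₀ hq0 hq1.le (by lia)
  have hlt : z * q ^ (2 * n) < q⁻¹ * q ^ (2 * n) :=
    mul_lt_mul_of_pos_right hz (zpow_pos hq0 _)
  have hle' : q⁻¹ * q ^ (2 * n) ≤ q⁻¹ * q ^ (2 : ℤ) :=
    mul_le_mul_of_nonneg_left hle (inv_pos.2 hq0).le
  have e : q⁻¹ * q ^ (2 : ℤ) = q := by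
    rw [zpow_ofNat]
    field_simp
  linarith

theorem irreducible_cSet_eq_Zfull_of_neg_two_lt (q c : ℝ) (hq0 : 0 < q) (hq1 : q < 1)
    (hc : -2 < c) (Z : Set ℝ) (hZ : IsIrreducibleCSet q c Z) :
    ∃! z : ℝ, (q ≤ z ∧ z < q⁻¹) ∧ Z = Zfull q z := by
  obtain ⟨w, hw⟩ := hZ.1.1
  obtain ⟨n, hn⟩ := exists_mul_zpow_mem_Ico hq0 hq1 (hZ.1.2.1 w hw)
  have hZw := hZ.eq_Zfull hq0 hc hw
  refine ⟨w * q ^ (2 * n), ⟨hn, by rw [Zfull_mul_zpow hq0, hZw]⟩, ?_⟩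
  generalize hz : w * q ^ (2 * n) = z at hn
  rintro z' ⟨⟨h1, h2⟩, hZ'⟩
  obtain ⟨m, rfl⟩ : z' ∈ Zfull q z := by
    rw [← hz, Zfull_mul_zpow hq0, ← hZw, hZ']
    exact mem_Zfull_self q z'
  suffices m = 0 by simp [this]
  rcases le_total 0 m with hm | hm
  · exact eq_zero_of_mul_zpow_mem_Ico hq0 hq1 hn.2 hm h1
  -- For `m ≤ 0` the roles of the two points are exchanged.
  · have h := eq_zero_of_mul_zpow_mem_Ico hq0 hq1 h2 (n := -m) (by lia) (by
      rw [mul_assoc, ← zpow_add₀ hq0.ne']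
      simpa using hn.1)
    lia
end

section
/- Let q be a real number with 0 < q < 1, let c ≤ −2 and let w ∈ (0,1] satisfy τ(w) = −c. Then for every z with q/w < z < w/q, the set Z_z = {z·q^(2n) : n ∈ ℤ} is an irreducible c-set. -/
/-!
Since `τ y - τ w = (y - w) (y - w⁻¹) / y`, one has `τ y > τ w = -c` for every positive `y` below `w`
or above `w⁻¹`. The odd translates `q ^ (2 m + 1) z` all lie in these two ranges: they are at most
`q z < w` when `m ≥ 0` and at least `q⁻¹ z > w⁻¹` when `m < 0`. Hence every point of `Z_z` is
strictly adapted in both directions (`tau_odd_translate`). It follows that `Z_z` is a `c`-set, and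
that any `c`-set meeting `Z_z` is closed under both shifts along the orbit and so contains all of it
(`IsCSet.mem_orbit`); two disjoint `c`-sets can therefore not both lie inside `Z_z`.
-/

open Classical

lemma tau_lt_tau_of_lt {y w : ℝ} (hy : 0 < y) (hw1 : w ≤ 1) (h : y < w) : tau w < tau y := by
  have hw : 0 < w := hy.trans h
  have key : tau y - tau w = (w - y) * (1 - y * w) / (y * w) := by
    unfold tau; field_simp; ring
  have h1 : 0 < 1 - y * w := by nlinarith
  have : 0 < (w - y) * (1 - y * w) / (y * w) :=
    div_pos (mul_pos (sub_pos.2 h) h1) (mul_pos hy hw)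
  linarith

lemma tau_inv (y : ℝ) : tau y⁻¹ = tau y := by
  simp [tau, add_comm]

/-- All odd translates of `z` avoid the interval `[w, w⁻¹]`, and `τ > τ w = -c` outside it. -/
lemma tau_odd_translate {q c w z : ℝ} (hq0 : 0 < q) (hq1 : q < 1)
    (hw0 : 0 < w) (hw1 : w ≤ 1) (hwc : tau w = -c)
    (h1 : q / w < z) (h2 : z < w / q) (m : ℤ) : 0 < c + tau (q ^ (2 * m + 1) * z) := by
  have hz : 0 < z := (div_pos hq0 hw0).trans h1
  have hpos : 0 < q ^ (2 * m + 1) * z := by positivity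
  suffices h : tau w < tau (q ^ (2 * m + 1) * z) by linarith
  rcases le_or_gt 0 m with hm | hm
  · refine tau_lt_tau_of_lt hpos hw1 ?_
    have hle : q ^ (2 * m + 1) ≤ q := by
      simpa using zpow_le_zpow_right_of_le_one₀ hq0 hq1.le (show (1 : ℤ) ≤ 2 * m + 1 by omega)
    have := (lt_div_iff₀ hq0).1 h2
    nlinarith
  · rw [← tau_inv (q ^ (2 * m + 1) * z)]
    refine tau_lt_tau_of_lt (inv_pos.2 hpos) hw1 ?_
    have hle : q⁻¹ ≤ q ^ (2 * m + 1) := by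
      simpa using zpow_le_zpow_right_of_le_one₀ hq0 hq1.le (show 2 * m + 1 ≤ (-1 : ℤ) by omega)
    rw [inv_lt_comm₀ hpos hw0]
    calc w⁻¹ = q⁻¹ * (q / w) := by field_simp
      _ < q⁻¹ * z := by gcongr
      _ ≤ q ^ (2 * m + 1) * z := by gcongr

lemma mul_orbit {q : ℝ} (hq : q ≠ 0) (z : ℝ) (n : ℤ) :
    q * (z * q ^ (2 * n)) = q ^ (2 * n + 1) * z := by
  rw [zpow_add_one₀ hq]; ring

lemma inv_mul_orbit {q : ℝ} (hq : q ≠ 0) (z : ℝ) (n : ℤ) :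
    q⁻¹ * (z * q ^ (2 * n)) = q ^ (2 * (n - 1) + 1) * z := by
  rw [show 2 * (n - 1) + 1 = 2 * n - 1 by ring, zpow_sub_one₀ hq]; ring

lemma shift_down_orbit {q : ℝ} (hq : q ≠ 0) (z : ℝ) (n : ℤ) :
    q ^ (2 : ℤ) * (z * q ^ (2 * n)) = z * q ^ (2 * (n + 1)) := by
  rw [mul_add_one, zpow_add₀ hq]; ring

lemma shift_up_orbit {q : ℝ} (hq : q ≠ 0) (z : ℝ) (n : ℤ) :
    q ^ (-2 : ℤ) * (z * q ^ (2 * n)) = z * q ^ (2 * (n - 1)) := by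
  rw [mul_sub_one, sub_eq_add_neg, zpow_add₀ hq]; ring

/-- A `c`-set containing one point of an orbit whose odd translates are all strictly
adapted contains the whole orbit. -/
lemma IsCSet.mem_orbit {q c z : ℝ} (hq : q ≠ 0) {Z : Set ℝ} (hZ : IsCSet q c Z)
    (h : ∀ m : ℤ, 0 < c + tau (q ^ (2 * m + 1) * z)) {n : ℤ} (hn : z * q ^ (2 * n) ∈ Z) (k : ℤ) :
    z * q ^ (2 * k) ∈ Z := by
  obtain ⟨-, -, -, hdown, hup⟩ := hZ
  induction k using Int.inductionOn' with
  | b => exact n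
  | zero => exact hn
  | succ k _ ih =>
    have := hdown _ ih (by rw [mul_orbit hq]; exact h k)
    rwa [shift_down_orbit hq] at this
  | pred k _ ih =>
    have := hup _ ih (by rw [inv_mul_orbit hq]; exact h (k - 1))
    rwa [shift_up_orbit hq] at this

theorem complementary_series_irreducible (q c w : ℝ) (hq0 : 0 < q) (hq1 : q < 1)
    (hc : c ≤ -2) (hw0 : 0 < w) (hw1 : w ≤ 1) (hwc : tau w = -c)
    (z : ℝ) (h1 : q / w < z) (h2 : z < w / q) :
    IsIrreducibleCSet q c (Zfull q z) := by
  have hq : q ≠ 0 := hq0.ne'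
  have hz : 0 < z := (div_pos hq0 hw0).trans h1
  have key := tau_odd_translate hq0 hq1 hw0 hw1 hwc h1 h2
  refine ⟨⟨⟨z, 0, by simp⟩, ?_, ?_, ?_, ?_⟩, ?_⟩
  · rintro _ ⟨n, rfl⟩
    positivity
  · rintro _ ⟨n, rfl⟩
    rw [mul_orbit hq, inv_mul_orbit hq]
    exact ⟨(key n).le, (key (n - 1)).le⟩
  · rintro _ ⟨n, rfl⟩ -
    exact ⟨n + 1, shift_down_orbit hq z n⟩
  · rintro _ ⟨n, rfl⟩ -
    exact ⟨n - 1, shift_up_orbit hq z n⟩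
  · rintro ⟨Z₁, Z₂, hZ₁, hZ₂, hdisj, hunion⟩
    obtain ⟨x, hx⟩ := hZ₁.1
    obtain ⟨y, hy⟩ := hZ₂.1
    obtain ⟨n, rfl⟩ : x ∈ Zfull q z := hunion ▸ Or.inl hx
    obtain ⟨m, rfl⟩ : y ∈ Zfull q z := hunion ▸ Or.inr hy
    exact Set.disjoint_left.1 hdisj (hZ₁.mem_orbit hq key hx m) hy
end

section
/- Let q be a real number with 0 < q < 1, let w satisfy 0 < w ≤ 1, let c = −τ(w), and let z satisfy q ≤ z < q⁻¹. Then the following are equivalent: (i) every element of Z_z = {z·q^(2n) : n ∈ ℤ} is c-adapted; (ii) τ(w) ≤ τ(q^(2m+1)·z) for all m ∈ ℤ; (iii) τ(w) ≤ τ(q·z) and τ(w) ≤ τ(z/q); (iv) q/w ≤ z ≤ w/q. -/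
/-!
The identity `τ(y) - τ(w) = (y - w)(yw - 1)/(yw)` shows that for `0 < w ≤ 1` and `y > 0` the
inequality `τ(w) ≤ τ(y)` holds exactly when `y ≤ w` or `w⁻¹ ≤ y` (`tau_le_tau_iff`). The
hypothesis `q ≤ z < q⁻¹` says `qz < 1 ≤ z/q`, so for `y = qz` only the alternative `y ≤ w` is
possible, and for `y = z/q` only `w⁻¹ ≤ y`; these two conditions are `z ≤ w/q` and `q/w ≤ z`.
The other points `q^(2m+1) z` satisfy `q^(2m+1) z ≤ qz` when `m ≥ 0` and `z/q ≤ q^(2m+1) z` when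
`m < 0`, so the inequality at `qz` and `z/q` implies it at all of them. Finally, adaptedness of
all points of `Zfull q z` is the same family of inequalities, because
`q·(z q^(2n)) = q^(2n+1) z` and `q⁻¹·(z q^(2n)) = q^(2(n-1)+1) z`.
-/

open Classical

theorem tau_le_tau_iff {w y : ℝ} (hw0 : 0 < w) (hw1 : w ≤ 1) (hy : 0 < y) :
    tau w ≤ tau y ↔ y ≤ w ∨ w⁻¹ ≤ y := by
  have hyw : 0 < y * w := mul_pos hy hw0
  have key : tau y - tau w = (y - w) * (y * w - 1) / (y * w) := by
    unfold tau
    field_simp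
    ring
  rw [← sub_nonneg, key, le_div_iff₀ hyw, zero_mul, inv_le_iff_one_le_mul₀ hw0]
  constructor
  · intro h
    by_contra! h'
    nlinarith [mul_pos (sub_pos.2 h'.1) (sub_pos.2 h'.2)]
  · rintro (h | h)
    · -- here `y ≤ w ≤ 1`, so both factors are nonpositive
      exact mul_nonneg_of_nonpos_of_nonpos (by linarith) (by nlinarith)
    · -- here `y ≥ w⁻¹ ≥ 1 ≥ w`, so both factors are nonnegative
      exact mul_nonneg (by nlinarith) (by linarith)

theorem tau_le_tau_mul_iff {q w z : ℝ} (hq0 : 0 < q) (hw0 : 0 < w) (hw1 : w ≤ 1)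
    (hz0 : 0 < z) (hz2 : z < q⁻¹) : tau w ≤ tau (q * z) ↔ q * z ≤ w := by
  rw [tau_le_tau_iff hw0 hw1 (mul_pos hq0 hz0), or_iff_left]
  have h1 : q * z < 1 := by
    simpa [hq0.ne'] using mul_lt_mul_of_pos_left hz2 hq0
  have h2 : 1 ≤ w⁻¹ := (one_le_inv₀ hw0).2 hw1
  linarith

theorem tau_le_tau_div_iff {q w z : ℝ} (hq0 : 0 < q) (hw0 : 0 < w) (hw1 : w ≤ 1)
    (hz1 : q ≤ z) : tau w ≤ tau (z / q) ↔ w⁻¹ ≤ z / q := by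
  rw [tau_le_tau_iff hw0 hw1 (div_pos (hq0.trans_le hz1) hq0), or_iff_right_iff_imp]
  intro h
  -- `1 ≤ z / q ≤ w ≤ 1` forces `w = 1`
  have h1 : 1 ≤ z / q := (one_le_div hq0).2 hz1
  have hw : w = 1 := le_antisymm hw1 (h1.trans h)
  simpa [hw] using h1

theorem adapted_tfae (q w z : ℝ) (hq0 : 0 < q) (hq1 : q < 1)
    (hw0 : 0 < w) (hw1 : w ≤ 1) (hz1 : q ≤ z) (hz2 : z < q⁻¹) :
    ((∀ x ∈ Zfull q z, 0 ≤ -tau w + tau (q * x) ∧ 0 ≤ -tau w + tau (q⁻¹ * x)) ↔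
        (∀ m : ℤ, tau w ≤ tau (q ^ (2 * m + 1) * z))) ∧
    ((∀ m : ℤ, tau w ≤ tau (q ^ (2 * m + 1) * z)) ↔
        (tau w ≤ tau (q * z) ∧ tau w ≤ tau (z / q))) ∧
    ((tau w ≤ tau (q * z) ∧ tau w ≤ tau (z / q)) ↔ (q / w ≤ z ∧ z ≤ w / q)) := by
  have hz0 : 0 < z := hq0.trans_le hz1
  have up (n : ℤ) : q * (z * q ^ (2 * n)) = q ^ (2 * n + 1) * z := by
    rw [zpow_add_one₀ hq0.ne']
    ring
  have down (n : ℤ) : q⁻¹ * (z * q ^ (2 * n)) = q ^ (2 * (n - 1) + 1) * z := by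
    rw [show 2 * (n - 1) + 1 = 2 * n - 1 by ring, zpow_sub_one₀ hq0.ne']
    ring
  refine ⟨⟨fun h m => ?_, ?_⟩, ⟨fun h => ⟨?_, ?_⟩, ?_⟩, ?_⟩
  · have := (h _ ⟨m, rfl⟩).1
    rw [up] at this
    linarith
  · rintro h _ ⟨n, rfl⟩
    rw [up, down]
    exact ⟨by linarith [h n], by linarith [h (n - 1)]⟩
  · simpa using h 0
  · simpa [zpow_neg_one, div_eq_inv_mul] using h (-1)
  · rintro ⟨h1, h2⟩ m
    rw [tau_le_tau_mul_iff hq0 hw0 hw1 hz0 hz2] at h1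
    rw [tau_le_tau_div_iff hq0 hw0 hw1 hz1] at h2
    rw [tau_le_tau_iff hw0 hw1 (mul_pos (zpow_pos hq0 _) hz0)]
    rcases le_or_gt 0 m with hm | hm
    · left
      have : q ^ (2 * m + 1) ≤ q ^ (1 : ℤ) :=
        zpow_le_zpow_right_of_le_one₀ hq0 hq1.le (by lia)
      rw [zpow_one] at this
      exact (mul_le_mul_of_nonneg_right this hz0.le).trans h1
    · right
      have : q ^ (-1 : ℤ) ≤ q ^ (2 * m + 1) :=
        zpow_le_zpow_right_of_le_one₀ hq0 hq1.le (by lia)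
      rw [zpow_neg_one] at this
      rw [div_eq_inv_mul] at h2
      exact h2.trans (mul_le_mul_of_nonneg_right this hz0.le)
  · rw [tau_le_tau_mul_iff hq0 hw0 hw1 hz0 hz2, tau_le_tau_div_iff hq0 hw0 hw1 hz1,
      and_comm, le_div_iff₀ hq0, le_div_iff₀ hq0, mul_comm z q, mul_comm w⁻¹ q, ← div_eq_mul_inv]
end

section
/- Let q be a real number with 0 < q < 1, let c ≤ −2 and let w ∈ (0,1] satisfy τ(w) = −c. Then the sets Z_{qw}⁺ = {qw·q^(2n) : n ∈ ℕ} and Z_{1/(qw)}⁻ = {(qw)⁻¹·q^(−2n) : n ∈ ℕ} are irreducible c-sets. -/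
/-!
On `(0, 1]` the function `τ` is strictly decreasing, so with `τ(w) = -c` the sign of `c + τ(w qᵏ)`
is decided by `k`: it is `0` for `k = 0` and positive for `k > 0` (`tau_mul_pow_pos`). For the
element `qw·q²ⁿ` of `Z_{qw}⁺`, multiplication by `q` gives `k = 2n + 2` and multiplication by `q⁻¹`
gives `k = 2n`. Hence every upward shift `n ↦ n + 1` is forced, and every downward shift
`n ↦ n - 1` is forced except at `n = 0`, where it is not required. This makes `Z_{qw}⁺` a `c`-set,
and by descent every `c`-set inside it contains the end point `qw` (`mem_of_subset_Zplus`), so two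
of them are never disjoint.

Since `τ(y⁻¹) = τ(y)`, inversion `z ↦ z⁻¹` preserves (irreducible) `c`-sets and exchanges the two
shifts; it carries `Z_{qw}⁺` to `Z_{1/(qw)}⁻`.
-/

open Classical

lemma tau_strictAnti {x y : ℝ} (hx : 0 < x) (hxy : x < y) (hy : y ≤ 1) : tau y < tau x := by
  have hy0 : 0 < y := hx.trans hxy
  have h : tau x - tau y = (y - x) * (1 - x * y) / (x * y) := by
    unfold tau
    field_simp
    ring
  have h1 : x * y < 1 := by nlinarith
  have : 0 < tau x - tau y := by
    rw [h]
    exact div_pos (mul_pos (by linarith) (by linarith)) (mul_pos hx hy0)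
  linarith

lemma tau_mul_pow_pos {q c w : ℝ} (hq0 : 0 < q) (hq1 : q < 1) (hw0 : 0 < w) (hw1 : w ≤ 1)
    (hwc : tau w = -c) {k : ℕ} (hk : k ≠ 0) : 0 < c + tau (w * q ^ k) := by
  have h : q ^ k < 1 := pow_lt_one₀ hq0.le hq1 hk
  have := tau_strictAnti (mul_pos hw0 (pow_pos hq0 k)) (mul_lt_of_lt_one_right hw0 h) hw1
  linarith

lemma isCSet_Zplus {q c w : ℝ} (hq0 : 0 < q) (hq1 : q < 1) (hw0 : 0 < w) (hw1 : w ≤ 1)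
    (hwc : tau w = -c) : IsCSet q c (Zplus q (q * w)) := by
  have up (n : ℕ) : q * (q * w * q ^ (2 * n)) = w * q ^ (2 * n + 2) := by ring
  have down (n : ℕ) : q⁻¹ * (q * w * q ^ (2 * n)) = w * q ^ (2 * n) := by field_simp
  refine ⟨⟨_, 0, rfl⟩, ?_, ?_, ?_, ?_⟩
  · rintro _ ⟨n, rfl⟩
    positivity
  · rintro _ ⟨n, rfl⟩
    rw [up, down]
    refine ⟨(tau_mul_pow_pos hq0 hq1 hw0 hw1 hwc (by omega)).le, ?_⟩
    rcases eq_or_ne n 0 with rfl | hn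
    · simp [hwc]
    · exact (tau_mul_pow_pos hq0 hq1 hw0 hw1 hwc (by omega)).le
  · rintro _ ⟨n, rfl⟩ -
    refine ⟨n + 1, ?_⟩
    rw [zpow_ofNat]
    ring
  · rintro _ ⟨n, rfl⟩ h
    cases n with
    | zero =>
      rw [down] at h
      simp [hwc] at h
    | succ n =>
      refine ⟨n, ?_⟩
      rw [zpow_neg, zpow_ofNat]
      field_simp
      ring

/-- Descent: each `q w q²⁽ⁿ⁺¹⁾` is strictly `c₊₁`-adapted, so from any element of a `c`-set inside
`Z_{qw}⁺` one reaches the end point `qw`. -/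
lemma mem_of_subset_Zplus {q c w : ℝ} (hq0 : 0 < q) (hq1 : q < 1) (hw0 : 0 < w) (hw1 : w ≤ 1)
    (hwc : tau w = -c) {Z : Set ℝ} (hZ : IsCSet q c Z) (hsub : Z ⊆ Zplus q (q * w)) :
    q * w ∈ Z := by
  obtain ⟨⟨z, hz⟩, -, -, -, hdown⟩ := hZ
  obtain ⟨n, rfl⟩ := hsub hz
  induction n with
  | zero => simpa using hz
  | succ n ih =>
    refine ih ?_
    have h := hdown _ hz (by
      have e : q⁻¹ * (q * w * q ^ (2 * (n + 1))) = w * q ^ (2 * (n + 1)) := by field_simp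
      rw [e]
      exact tau_mul_pow_pos hq0 hq1 hw0 hw1 hwc (by omega))
    convert h using 1
    rw [zpow_neg, zpow_ofNat]
    field_simp
    ring

lemma isIrreducibleCSet_Zplus {q c w : ℝ} (hq0 : 0 < q) (hq1 : q < 1) (hw0 : 0 < w) (hw1 : w ≤ 1)
    (hwc : tau w = -c) : IsIrreducibleCSet q c (Zplus q (q * w)) := by
  refine ⟨isCSet_Zplus hq0 hq1 hw0 hw1 hwc, ?_⟩
  rintro ⟨Z₁, Z₂, h₁, h₂, hd, he⟩
  exact Set.disjoint_left.mp hd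
    (mem_of_subset_Zplus hq0 hq1 hw0 hw1 hwc h₁ (he ▸ Set.subset_union_left))
    (mem_of_subset_Zplus hq0 hq1 hw0 hw1 hwc h₂ (he ▸ Set.subset_union_right))

lemma IsCSet.inv {q c : ℝ} {Z : Set ℝ} (h : IsCSet q c Z) : IsCSet q c (Inv.inv ⁻¹' Z) := by
  obtain ⟨⟨z₀, hz₀⟩, hpos, had, hup, hdown⟩ := h
  have e₁ (z : ℝ) : tau (q * z) = tau (q⁻¹ * z⁻¹) := by rw [← tau_inv, mul_inv]
  have e₂ (z : ℝ) : tau (q⁻¹ * z) = tau (q * z⁻¹) := by rw [← tau_inv, mul_inv, inv_inv]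
  refine ⟨⟨z₀⁻¹, by simpa using hz₀⟩, fun z hz => inv_pos.mp (hpos _ hz), fun z hz => ?_,
    fun z hz h => ?_, fun z hz h => ?_⟩
  · rw [e₁ z, e₂ z]
    exact (had _ hz).symm
  · rw [e₁] at h
    simpa only [Set.mem_preimage, mul_inv, zpow_neg] using hdown _ hz h
  · rw [e₂] at h
    simpa only [Set.mem_preimage, mul_inv, zpow_neg, inv_inv] using hup _ hz h

lemma IsIrreducibleCSet.inv {q c : ℝ} {Z : Set ℝ} (h : IsIrreducibleCSet q c Z) :
    IsIrreducibleCSet q c (Inv.inv ⁻¹' Z) := by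
  refine ⟨h.1.inv, ?_⟩
  rintro ⟨Z₁, Z₂, h₁, h₂, hd, he⟩
  refine h.2 ⟨_, _, h₁.inv, h₂.inv, hd.preimage _, ?_⟩
  rw [← Set.preimage_union, ← he]
  ext z
  simp

lemma Zminus_inv (q z : ℝ) : Zminus q z⁻¹ = Inv.inv ⁻¹' Zplus q z := by
  ext x
  refine exists_congr fun n => ?_
  rw [inv_eq_iff_eq_inv, mul_inv, zpow_neg]
  norm_cast

theorem large_discrete_series_irreducible (q c w : ℝ) (hq0 : 0 < q) (hq1 : q < 1)
    (hc : c ≤ -2) (hw0 : 0 < w) (hw1 : w ≤ 1) (hwc : tau w = -c) :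
    IsIrreducibleCSet q c (Zplus q (q * w)) ∧
    IsIrreducibleCSet q c (Zminus q (q * w)⁻¹) := by
  have h := isIrreducibleCSet_Zplus hq0 hq1 hw0 hw1 hwc
  exact ⟨h, Zminus_inv q (q * w) ▸ h.inv⟩
end

section
/- Let q be a real number with 0 < q < 1, let c ≤ −2 and let w ∈ (0,1] satisfy τ(w) = −c. Then every irreducible c-set Z is one of the following sets: Z_z = {z·q^(2n) : n ∈ ℤ} for some z with q/w < z < w/q; or Z_{qw}⁺ = {qw·q^(2n) : n ∈ ℕ}; or Z_{1/(qw)}⁻ = {(qw)⁻¹·q^(−2n) : n ∈ ℕ}; or, in case w > q, Z_{q/w}⁺ = {(q/w)·q^(2n) : n ∈ ℕ} or Z_{w/q}⁻ = {(w/q)·q^(−2n) : n ∈ ℕ}; or, in case w = q, the singleton {1}. -/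
/-!
Write `z → q²z` for the step allowed when `c + τ(qz) > 0`. The reverse step `q²z → z` is allowed
when `c + τ(q⁻¹·q²z) > 0`, which is the same condition on the same midpoint `qz`; hence the allowed
steps form an undirected graph, and an irreducible `c`-set equals each of its nonempty step-closed
subsets (`IsIrreducibleCSet.eq_of_subset`).

Since `τ(w) = -c` with `0 < w ≤ 1`, a midpoint `y` satisfies `c + τ(y) > 0` iff `y < w` or
`y > w⁻¹`, and `c + τ(y) ≥ 0` iff `y ≤ w` or `y ≥ w⁻¹`. So a step out of an adapted point is blocked
only if the midpoint is exactly `w` or `w⁻¹`. A point `x` of `Z` at which the downward step is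
blocked is `w/q` or `(qw)⁻¹`, and `Z` is then the upward ray from `x`, except that for `x = w/q` the
upward step is itself blocked when `w = q`, which gives `{1}`; `w < q` would contradict adaptedness.
Blocked upward steps are the mirror image. If no step is blocked, `Z` is a full orbit, no midpoint
lies in `[w, w⁻¹]`, and the largest point below `w/q` is the required representative.
-/

open Classical

lemma add_tau_pos_iff {c w y : ℝ} (hw0 : 0 < w) (hw1 : w ≤ 1) (hwc : tau w = -c) (hy : 0 < y) :
    0 < c + tau y ↔ y < w ∨ w⁻¹ < y := by
  have h : c + tau y = (w - y) * (w⁻¹ - y) / y := by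
    have : c = -tau w := by linarith
    rw [this]; unfold tau; field_simp; ring
  have hw : w ≤ w⁻¹ := hw1.trans ((one_le_inv₀ hw0).2 hw1)
  rw [h, div_pos_iff_of_pos_right hy, mul_pos_iff]
  constructor
  · rintro (⟨h1, _⟩ | ⟨_, h2⟩)
    · left; linarith
    · right; linarith
  · rintro (h1 | h1)
    · left; constructor <;> linarith
    · right; constructor <;> linarith

lemma add_tau_nonneg_iff {c w y : ℝ} (hw0 : 0 < w) (hw1 : w ≤ 1) (hwc : tau w = -c) (hy : 0 < y) :
    0 ≤ c + tau y ↔ y ≤ w ∨ w⁻¹ ≤ y := by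
  have h : c + tau y = (w - y) * (w⁻¹ - y) / y := by
    have : c = -tau w := by linarith
    rw [this]; unfold tau; field_simp; ring
  have hw : w ≤ w⁻¹ := hw1.trans ((one_le_inv₀ hw0).2 hw1)
  rw [h, le_div_iff₀ hy, zero_mul, mul_nonneg_iff]
  constructor
  · rintro (⟨h1, _⟩ | ⟨_, h2⟩)
    · left; linarith
    · right; linarith
  · rintro (h1 | h1)
    · left; constructor <;> linarith
    · right; constructor <;> linarith

/-- Because steps are reversible, the complement of a step-closed subset of a `c`-set is again
step-closed, so an irreducible `c`-set has no proper nonempty step-closed subset. -/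
lemma IsIrreducibleCSet.eq_of_subset {q c : ℝ} {Z S : Set ℝ} (hq0 : 0 < q)
    (hZ : IsIrreducibleCSet q c Z) (hSZ : S ⊆ Z) (hne : S.Nonempty)
    (hd : ∀ s ∈ S, 0 < c + tau (q * s) → q ^ (2 : ℤ) * s ∈ S)
    (hu : ∀ s ∈ S, 0 < c + tau (q⁻¹ * s) → q ^ (-2 : ℤ) * s ∈ S) : Z = S := by
  obtain ⟨⟨-, hpos, had, hdZ, huZ⟩, hirr⟩ := hZ
  by_contra hcon
  have hq : q ≠ 0 := hq0.ne'
  have h2 : q ^ (2 : ℤ) = q * q := by rw [zpow_ofNat, sq]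
  have h2' : q ^ (-2 : ℤ) = q⁻¹ * q⁻¹ := by
    rw [zpow_neg, h2, mul_inv]
  refine hirr ⟨S, Z \ S, ⟨hne, fun z hz => hpos z (hSZ hz), fun z hz => had z (hSZ hz), hd, hu⟩,
    ⟨?_, fun z hz => hpos z hz.1, fun z hz => had z hz.1, ?_, ?_⟩, Set.disjoint_sdiff_right,
    (Set.union_sdiff_cancel hSZ).symm⟩
  · by_contra hemp
    rw [Set.not_nonempty_iff_eq_empty, Set.sdiff_eq_empty] at hemp
    exact hcon (hemp.antisymm hSZ)
  · refine fun z hz h => ⟨hdZ z hz.1 h, fun hS => hz.2 ?_⟩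
    have e : q⁻¹ * (q ^ (2 : ℤ) * z) = q * z := by rw [h2]; field_simp
    have := hu _ hS (by rwa [e])
    rwa [h2, h2', show q⁻¹ * q⁻¹ * (q * q * z) = z by field_simp] at this
  · refine fun z hz h => ⟨huZ z hz.1 h, fun hS => hz.2 ?_⟩
    have e : q * (q ^ (-2 : ℤ) * z) = q⁻¹ * z := by rw [h2']; field_simp
    have := hd _ hS (by rwa [e])
    rwa [h2, h2', show q * q * (q⁻¹ * q⁻¹ * z) = z by field_simp] at this

/-- If the downward step is blocked at `x ∈ Z` and no upward step from `x` on is, then `Z` is the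
upward ray from `x`. -/
lemma IsIrreducibleCSet.eq_Zminus {q c x : ℝ} {Z : Set ℝ} (hq0 : 0 < q)
    (hZ : IsIrreducibleCSet q c Z) (hx : x ∈ Z) (hx0 : ¬ 0 < c + tau (q * x))
    (hup : ∀ n : ℕ, 0 < c + tau (q⁻¹ * (x * q ^ (-(2 * n : ℤ))))) : Z = Zminus q x := by
  have hq : q ≠ 0 := hq0.ne'
  have hstep : ∀ n : ℕ, q ^ (-2 : ℤ) * (x * q ^ (-(2 * n : ℤ)))
      = x * q ^ (-(2 * (n + 1 : ℕ) : ℤ)) := by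
    intro n
    rw [mul_left_comm, ← zpow_add₀ hq]
    congr 2; push_cast; ring
  refine hZ.eq_of_subset hq0 ?_ ⟨x, 0, by simp⟩ ?_ ?_
  · rintro _ ⟨n, rfl⟩
    induction n with
    | zero => simpa using hx
    | succ n ih => rw [← hstep]; exact hZ.1.2.2.2.2 _ ih (hup n)
  · rintro _ ⟨n, rfl⟩ h
    cases n with
    | zero => exact absurd (by simpa using h) hx0
    | succ n =>
      refine ⟨n, ?_⟩
      rw [← hstep, ← mul_assoc, ← zpow_add₀ hq]; simp
  · rintro _ ⟨n, rfl⟩ _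
    exact ⟨n + 1, hstep n⟩

/-- If the upward step is blocked at `x ∈ Z` and no downward step from `x` on is, then `Z` is the
downward ray from `x`. -/
lemma IsIrreducibleCSet.eq_Zplus {q c x : ℝ} {Z : Set ℝ} (hq0 : 0 < q)
    (hZ : IsIrreducibleCSet q c Z) (hx : x ∈ Z) (hx0 : ¬ 0 < c + tau (q⁻¹ * x))
    (hdown : ∀ n : ℕ, 0 < c + tau (q * (x * q ^ (2 * n)))) : Z = Zplus q x := by
  have hq : q ≠ 0 := hq0.ne'
  have hstep : ∀ n : ℕ, q ^ (2 : ℤ) * (x * q ^ (2 * n)) = x * q ^ (2 * (n + 1)) := by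
    intro n
    rw [zpow_ofNat]; ring
  refine hZ.eq_of_subset hq0 ?_ ⟨x, 0, by simp⟩ ?_ ?_
  · rintro _ ⟨n, rfl⟩
    induction n with
    | zero => simpa using hx
    | succ n ih => rw [← hstep]; exact hZ.1.2.2.2.1 _ ih (hdown n)
  · rintro _ ⟨n, rfl⟩ _
    exact ⟨n + 1, hstep n⟩
  · rintro _ ⟨n, rfl⟩ h
    cases n with
    | zero => exact absurd (by simpa using h) hx0
    | succ n =>
      refine ⟨n, ?_⟩
      rw [← hstep, ← mul_assoc, ← zpow_add₀ hq]; simp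

/-- If no step is blocked anywhere in `Z`, the full orbit of each of its points lies in `Z`. -/
lemma IsCSet.Zfull_subset {q c x : ℝ} {Z : Set ℝ} (hq0 : 0 < q) (hZ : IsCSet q c Z) (hx : x ∈ Z)
    (hd : ∀ z ∈ Z, 0 < c + tau (q * z)) (hu : ∀ z ∈ Z, 0 < c + tau (q⁻¹ * z)) :
    Zfull q x ⊆ Z := by
  have hq : q ≠ 0 := hq0.ne'
  rintro _ ⟨n, rfl⟩
  induction n using Int.induction_on with
  | zero => simpa using hx
  | succ n ih =>
    have := hZ.2.2.2.1 _ ih (hd _ ih)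
    rwa [mul_left_comm, ← zpow_add₀ hq, show (2 : ℤ) + 2 * n = 2 * (n + 1) by ring] at this
  | pred n ih =>
    have := hZ.2.2.2.2 _ ih (hu _ ih)
    rwa [mul_left_comm, ← zpow_add₀ hq, show (-2 : ℤ) + 2 * -n = 2 * (-n - 1) by ring] at this

theorem classification_irreducible_cSets_le_neg_two (q c w : ℝ) (hq0 : 0 < q) (hq1 : q < 1)
    (hc : c ≤ -2) (hw0 : 0 < w) (hw1 : w ≤ 1) (hwc : tau w = -c)
    (Z : Set ℝ) (hZ : IsIrreducibleCSet q c Z) :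
    (∃ z : ℝ, q / w < z ∧ z < w / q ∧ Z = Zfull q z) ∨
    Z = Zplus q (q * w) ∨ Z = Zminus q (q * w)⁻¹ ∨
    (q < w ∧ (Z = Zplus q (q / w) ∨ Z = Zminus q (w / q))) ∨
    (w = q ∧ Z = {1}) := by
  have hq : q ≠ 0 := hq0.ne'
  have hw : w ≠ 0 := hw0.ne'
  have hwi : w ≤ w⁻¹ := hw1.trans ((one_le_inv₀ hw0).2 hw1)
  have hqi : 1 < q⁻¹ := (one_lt_inv₀ hq0).2 hq1
  obtain ⟨hne, hpos, had, -, -⟩ := hZ.1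
  have P := @add_tau_pos_iff c w
  have hPw : ¬ 0 < c + tau w := by rw [hwc]; simp
  have hPwi : ¬ 0 < c + tau w⁻¹ := by
    have : tau w⁻¹ = tau w := by unfold tau; rw [inv_inv, add_comm]
    rwa [this]
  have hge : ∀ n : ℕ, 1 ≤ q ^ (-(2 * n : ℤ)) := by
    intro n
    rw [zpow_neg]
    refine (one_le_inv₀ (by positivity)).2 ?_
    exact_mod_cast pow_le_one₀ (n := 2 * n) hq0.le hq1.le
  have hle : ∀ n : ℕ, q ^ (2 * n) ≤ 1 := fun n => pow_le_one₀ hq0.le hq1.le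
  -- If `w = q`, both midpoints next to `1` are blocked.
  have hone : w = q → 1 ∈ Z → Z = {1} := by
    intro e h1
    refine hZ.eq_of_subset hq0 (by simpa using h1) ⟨1, rfl⟩ ?_ ?_
    · rintro s rfl h
      rw [mul_one, ← e] at h; exact absurd h hPw
    · rintro s rfl h
      rw [mul_one, ← e] at h; exact absurd h hPwi
  by_cases h1 : w / q ∈ Z
  · have hqw : q ≤ w := by
      rcases (add_tau_nonneg_iff hw0 hw1 hwc (by positivity)).1 (had _ h1).2 with h | h
      · exfalso
        have : q⁻¹ * (w / q) = w * (q⁻¹ * q⁻¹) := by field_simp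
        rw [this] at h
        nlinarith [mul_lt_mul_of_pos_left (one_lt_mul hqi.le hqi) hw0]
      · have : w⁻¹ * (w * q ^ 2) ≤ q⁻¹ * (w / q) * (w * q ^ 2) := by gcongr
        have e1 : w⁻¹ * (w * q ^ 2) = q ^ 2 := by field_simp
        have e2 : q⁻¹ * (w / q) * (w * q ^ 2) = w ^ 2 := by field_simp
        rw [e1, e2] at this
        exact le_of_sq_le_sq this hw0.le
    rcases hqw.lt_or_eq with hlt | heq
    · refine Or.inr (Or.inr (Or.inr (Or.inl ⟨hlt, Or.inr ?_⟩)))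
      refine hZ.eq_Zminus hq0 h1 (by rwa [mul_div_cancel₀ _ hq]) fun n => ?_
      refine (P hw0 hw1 hwc (by positivity)).2 (Or.inr ?_)
      have : w⁻¹ < q⁻¹ * (w / q) := by
        rw [← sub_pos]
        have : q⁻¹ * (w / q) - w⁻¹ = (w - q) * (w + q) / (q ^ 2 * w) := by field_simp; ring
        rw [this]
        have := sub_pos.2 hlt
        positivity
      rw [← mul_assoc]
      exact this.trans_le (le_mul_of_one_le_right (by positivity) (hge n))
    · refine Or.inr (Or.inr (Or.inr (Or.inr ⟨heq.symm, hone heq.symm ?_⟩)))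
      rwa [← heq, div_self hq] at h1
  by_cases h2 : q / w ∈ Z
  · have hqw : q ≤ w := by
      rcases (add_tau_nonneg_iff hw0 hw1 hwc (by positivity)).1 (had _ h2).1 with h | h
      · have : q * (q / w) * w ≤ w * w := by gcongr
        have e1 : q * (q / w) * w = q ^ 2 := by field_simp
        rw [e1, ← sq] at this
        exact le_of_sq_le_sq this hw0.le
      · exfalso
        have e1 : q * (q / w) = q * q * w⁻¹ := by field_simp
        rw [e1] at h
        have : q * q < 1 := by nlinarith
        nlinarith [inv_pos.2 hw0]
    rcases hqw.lt_or_eq with hlt | heq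
    · refine Or.inr (Or.inr (Or.inr (Or.inl ⟨hlt, Or.inl ?_⟩)))
      refine hZ.eq_Zplus hq0 h2 ?_ fun n => ?_
      · rwa [show q⁻¹ * (q / w) = w⁻¹ by field_simp]
      refine (P hw0 hw1 hwc (by positivity)).2 (Or.inl ?_)
      have : q * (q / w) < w := by
        rw [← mul_div_assoc, div_lt_iff₀ hw0]; nlinarith
      rw [← mul_assoc]
      exact (mul_le_of_le_one_right (by positivity) (hle n)).trans_lt this
    · refine Or.inr (Or.inr (Or.inr (Or.inr ⟨heq.symm, hone heq.symm ?_⟩)))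
      rwa [← heq, div_self hq] at h2
  by_cases h3 : (q * w)⁻¹ ∈ Z
  · refine Or.inr (Or.inr (Or.inl ?_))
    refine hZ.eq_Zminus hq0 h3 ?_ fun n => ?_
    · rwa [show q * (q * w)⁻¹ = w⁻¹ by field_simp]
    refine (P hw0 hw1 hwc (by positivity)).2 (Or.inr ?_)
    have : w⁻¹ < q⁻¹ * (q * w)⁻¹ := by
      rw [show q⁻¹ * (q * w)⁻¹ = q⁻¹ * q⁻¹ * w⁻¹ by field_simp]
      exact lt_mul_of_one_lt_left (by positivity) (one_lt_mul hqi.le hqi)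
    rw [← mul_assoc]
    exact this.trans_le (le_mul_of_one_le_right (by positivity) (hge n))
  by_cases h4 : q * w ∈ Z
  · refine Or.inr (Or.inl ?_)
    refine hZ.eq_Zplus hq0 h4 ?_ fun n => ?_
    · rwa [show q⁻¹ * (q * w) = w by field_simp]
    refine (P hw0 hw1 hwc (by positivity)).2 (Or.inl ?_)
    have : q * (q * w) < w := by
      have : q * q < 1 := by nlinarith
      nlinarith
    rw [← mul_assoc]
    exact (mul_le_of_le_one_right (by positivity) (hle n)).trans_lt this
  -- The four points where a step can be blocked are absent from `Z`.
  left
  have hd : ∀ z ∈ Z, 0 < c + tau (q * z) := by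
    intro z hz
    have hz0 := hpos z hz
    refine (P hw0 hw1 hwc (by positivity)).2 ?_
    rcases (add_tau_nonneg_iff hw0 hw1 hwc (by positivity)).1 (had z hz).1 with h | h
    · refine Or.inl (h.lt_of_ne fun e => h1 ?_)
      rwa [← e, mul_div_cancel_left₀ _ hq]
    · refine Or.inr (h.lt_of_ne fun e => h3 ?_)
      rwa [mul_inv, e, inv_mul_cancel_left₀ hq]
  have hu : ∀ z ∈ Z, 0 < c + tau (q⁻¹ * z) := by
    intro z hz
    have hz0 := hpos z hz
    refine (P hw0 hw1 hwc (by positivity)).2 ?_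
    rcases (add_tau_nonneg_iff hw0 hw1 hwc (by positivity)).1 (had z hz).2 with h | h
    · refine Or.inl (h.lt_of_ne fun e => h4 ?_)
      rwa [← e, mul_inv_cancel_left₀ hq]
    · refine Or.inr (h.lt_of_ne fun e => h2 ?_)
      rwa [div_eq_mul_inv, e, mul_inv_cancel_left₀ hq]
  obtain ⟨x, hx⟩ := hne
  have hx0 := hpos x hx
  -- The largest point of the orbit of `x` that is at most `w / q`.
  obtain ⟨n, hn1, hn2⟩ := exists_mem_Ico_zpow (x := w / q / x) (y := q⁻¹ ^ 2) (by positivity)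
    (one_lt_pow₀ hqi two_ne_zero)
  have hz : ∀ m : ℤ, x * (q⁻¹ ^ 2) ^ m ∈ Z := by
    intro m
    refine hZ.1.Zfull_subset hq0 hx hd hu ⟨-m, ?_⟩
    rw [← zpow_natCast, ← zpow_mul, inv_zpow']; congr 2; push_cast; ring
  have hzn := hz n
  have hzn1 := hz (n + 1)
  rw [le_div_iff₀ hx0, mul_comm] at hn1
  rw [div_lt_iff₀ hx0, mul_comm] at hn2
  rw [zpow_add_one₀ (by positivity)] at hn2 hzn1
  set z := x * (q⁻¹ ^ 2) ^ n with hzdef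
  rw [← mul_assoc, ← hzdef] at hn2 hzn1
  have hz0 := hpos z hzn
  refine ⟨z, ?_, hn1.lt_of_ne fun e => h1 (e ▸ hzn), ?_⟩
  · have e : q * (z * q⁻¹ ^ 2) = z / q := by field_simp
    rcases (P hw0 hw1 hwc (by positivity)).1 (hd _ hzn1) with h | h
    · rw [div_lt_iff₀ hq0, mul_comm] at hn2
      linarith
    · rw [e, lt_div_iff₀ hq0] at h
      rwa [div_eq_mul_inv, mul_comm]
  · refine hZ.eq_of_subset hq0 (hZ.1.Zfull_subset hq0 hzn hd hu) ⟨z, 0, by simp⟩ ?_ ?_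
    · rintro _ ⟨m, rfl⟩ _
      refine ⟨m + 1, ?_⟩
      rw [mul_left_comm, ← zpow_add₀ hq]; congr 2; ring
    · rintro _ ⟨m, rfl⟩ _
      refine ⟨m - 1, ?_⟩
      rw [mul_left_comm, ← zpow_add₀ hq]; congr 2; ring
end

section
/- Let q be a real number with 0 < q < 1, let c < −2 and let w ∈ (0,1) satisfy τ(w) = −c. Then the following irreducible c-sets are pairwise distinct: the sets Z_z for z with q ≤ z < q⁻¹ and q/w < z < w/q (distinct sets for distinct such z); the set Z_{qw}⁺; the set Z_{1/(qw)}⁻; and, in case w > q, the sets Z_{q/w}⁺ and Z_{w/q}⁻. -/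
/-!
For positive `z`, the three kinds of sets are told apart by invariance under the shifts by `q²` and `q⁻²`:
`Zfull` is stable under both, `Zplus` has a greatest element and is stable only under `q²`, and
`Zminus` has a least element and is stable only under `q⁻²`. Two sets `Zplus` (or `Zminus`)
agree only if their greatest (least) elements agree, and `qw ≠ q/w` because `w ≠ w⁻¹`.
Finally `[q, q⁻¹)` is a fundamental domain for multiplication by `q²`, so distinct points in it
generate distinct sets `Zfull`.
-/

open Classical

lemma self_mem_Zplus (q a : ℝ) : a ∈ Zplus q a := ⟨0, by simp⟩

lemma self_mem_Zminus (q a : ℝ) : a ∈ Zminus q a := ⟨0, by simp⟩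

lemma self_mem_Zfull (q a : ℝ) : a ∈ Zfull q a := ⟨0, by simp⟩

lemma le_of_mem_Zplus {q a x : ℝ} (hq0 : 0 < q) (hq1 : q < 1) (ha : 0 < a)
    (hx : x ∈ Zplus q a) : x ≤ a := by
  obtain ⟨n, rfl⟩ := hx
  exact mul_le_of_le_one_right ha.le (pow_le_one₀ hq0.le hq1.le)

lemma le_of_mem_Zminus {q a x : ℝ} (hq0 : 0 < q) (hq1 : q < 1) (ha : 0 < a)
    (hx : x ∈ Zminus q a) : a ≤ x := by
  obtain ⟨n, rfl⟩ := hx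
  exact le_mul_of_one_le_right ha.le (one_le_zpow_of_nonpos₀ hq0 hq1.le (by omega))

lemma Zplus_injective {q a b : ℝ} (hq0 : 0 < q) (hq1 : q < 1) (ha : 0 < a) (hb : 0 < b)
    (h : Zplus q a = Zplus q b) : a = b :=
  le_antisymm (le_of_mem_Zplus hq0 hq1 hb (h ▸ self_mem_Zplus q a))
    (le_of_mem_Zplus hq0 hq1 ha (h ▸ self_mem_Zplus q b))

lemma Zminus_injective {q a b : ℝ} (hq0 : 0 < q) (hq1 : q < 1) (ha : 0 < a) (hb : 0 < b)
    (h : Zminus q a = Zminus q b) : a = b :=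
  le_antisymm (le_of_mem_Zminus hq0 hq1 ha (h ▸ self_mem_Zminus q b))
    (le_of_mem_Zminus hq0 hq1 hb (h ▸ self_mem_Zminus q a))

lemma mul_mem_Zfull {q z x : ℝ} (hq0 : 0 < q) (k : ℤ) (hx : x ∈ Zfull q z) :
    x * q ^ (2 * k) ∈ Zfull q z := by
  obtain ⟨n, rfl⟩ := hx
  exact ⟨n + k, by rw [mul_add, zpow_add₀ hq0.ne', mul_assoc]⟩

/-- `Zfull` has no greatest element, since it is stable under `q⁻²`. -/
lemma Zfull_ne_Zplus {q z a : ℝ} (hq0 : 0 < q) (hq1 : q < 1) (ha : 0 < a) :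
    Zfull q z ≠ Zplus q a := by
  intro h
  have h1 : a * q ^ (2 * (-1) : ℤ) ∈ Zfull q z := mul_mem_Zfull hq0 _ (h ▸ self_mem_Zplus q a)
  have h2 := le_of_mem_Zplus hq0 hq1 ha (h ▸ h1)
  exact absurd h2 (not_le.2 (lt_mul_of_one_lt_right ha
    (one_lt_zpow_of_neg₀ hq0 hq1 (by norm_num))))

/-- `Zfull` has no least element, since it is stable under `q²`. -/
lemma Zfull_ne_Zminus {q z a : ℝ} (hq0 : 0 < q) (hq1 : q < 1) (ha : 0 < a) :
    Zfull q z ≠ Zminus q a := by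
  intro h
  have h1 : a * q ^ (2 * 1 : ℤ) ∈ Zfull q z := mul_mem_Zfull hq0 _ (h ▸ self_mem_Zminus q a)
  have h2 := le_of_mem_Zminus hq0 hq1 ha (h ▸ h1)
  exact absurd h2 (not_le.2 (mul_lt_of_lt_one_right ha
    (zpow_lt_one₀ hq0 hq1 (by norm_num))))

/-- `Zplus` has no least element, since it is stable under `q²`. -/
lemma Zplus_ne_Zminus {q a b : ℝ} (hq0 : 0 < q) (hq1 : q < 1) (hb : 0 < b) :
    Zplus q a ≠ Zminus q b := by
  intro h
  obtain ⟨n, hn⟩ : b ∈ Zplus q a := h ▸ self_mem_Zminus q b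
  have h1 : b * q ^ 2 ∈ Zplus q a := ⟨n + 1, by rw [hn]; ring⟩
  have h2 := le_of_mem_Zminus hq0 hq1 hb (h ▸ h1)
  exact absurd h2 (not_le.2 (mul_lt_of_lt_one_right hb (pow_lt_one₀ hq0.le hq1 (by norm_num))))

/-- Since `z q² < q` for `z < q⁻¹`, a shift by a positive power of `q²` leaves `[q, q⁻¹)` at its
lower end. Applied to a shift and to its inverse, this forces the exponent to be zero. -/
lemma exponent_nonpos {q y z : ℝ} {n : ℤ} (hq0 : 0 < q) (hq1 : q < 1)
    (hy : q ≤ y) (hz : 0 < z) (hz' : z < q⁻¹) (h : y = z * q ^ (2 * n)) : n ≤ 0 := by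
  by_contra! hn
  have h1 : q ^ (2 * n) ≤ q ^ (2 : ℤ) := zpow_le_zpow_right_of_le_one₀ hq0 hq1.le (by omega)
  have h2 : z * q ^ (2 * n) < q := calc
    z * q ^ (2 * n) ≤ z * q ^ (2 : ℤ) := mul_le_mul_of_nonneg_left h1 hz.le
    _ < q⁻¹ * q ^ (2 : ℤ) := mul_lt_mul_of_pos_right hz' (zpow_pos hq0 _)
    _ = q := by field_simp
  linarith

lemma Zfull_injOn {q y z : ℝ} (hq0 : 0 < q) (hq1 : q < 1) (hy : q ≤ y) (hy' : y < q⁻¹)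
    (hz : q ≤ z) (hz' : z < q⁻¹) (h : Zfull q y = Zfull q z) : y = z := by
  obtain ⟨n, hn⟩ : y ∈ Zfull q z := h ▸ self_mem_Zfull q y
  have hn' : z = y * q ^ (2 * -n) := by
    rw [hn, mul_assoc, ← zpow_add₀ hq0.ne']
    simp
  have h1 := exponent_nonpos hq0 hq1 hy (hq0.trans_le hz) hz' hn
  have h2 := exponent_nonpos hq0 hq1 hz (hq0.trans_le hy) hy' hn'
  obtain rfl : n = 0 := by omega
  simpa using hn

theorem irreducible_cSets_pairwise_distinct (q c w : ℝ) (hq0 : 0 < q) (hq1 : q < 1)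
    (hc : c < -2) (hw0 : 0 < w) (hw1 : w < 1) (hwc : tau w = -c) :
    (∀ z₁ z₂ : ℝ, (q ≤ z₁ ∧ z₁ < q⁻¹ ∧ q / w < z₁ ∧ z₁ < w / q) →
        (q ≤ z₂ ∧ z₂ < q⁻¹ ∧ q / w < z₂ ∧ z₂ < w / q) →
        Zfull q z₁ = Zfull q z₂ → z₁ = z₂) ∧
    (∀ z : ℝ, (q ≤ z ∧ z < q⁻¹ ∧ q / w < z ∧ z < w / q) →
        Zfull q z ≠ Zplus q (q * w) ∧ Zfull q z ≠ Zminus q (q * w)⁻¹) ∧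
    Zplus q (q * w) ≠ Zminus q (q * w)⁻¹ ∧
    (q < w →
      (∀ z : ℝ, (q ≤ z ∧ z < q⁻¹ ∧ q / w < z ∧ z < w / q) →
          Zfull q z ≠ Zplus q (q / w) ∧ Zfull q z ≠ Zminus q (w / q)) ∧
      Zplus q (q * w) ≠ Zplus q (q / w) ∧
      Zplus q (q * w) ≠ Zminus q (w / q) ∧
      Zminus q (q * w)⁻¹ ≠ Zplus q (q / w) ∧
      Zminus q (q * w)⁻¹ ≠ Zminus q (w / q) ∧
      Zplus q (q / w) ≠ Zminus q (w / q)) := by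
  have ha : 0 < q * w := mul_pos hq0 hw0
  have ha' : 0 < (q * w)⁻¹ := inv_pos.2 ha
  have hb : 0 < q / w := div_pos hq0 hw0
  have hb' : 0 < w / q := div_pos hw0 hq0
  have hne : q * w < q / w := by
    rw [lt_div_iff₀ hw0]
    nlinarith [mul_lt_one_of_nonneg_of_lt_one_left hw0.le hw1 hw1.le]
  refine ⟨fun z₁ z₂ h₁ h₂ h => Zfull_injOn hq0 hq1 h₁.1 h₁.2.1 h₂.1 h₂.2.1 h,
    fun z _ => ⟨Zfull_ne_Zplus hq0 hq1 ha, Zfull_ne_Zminus hq0 hq1 ha'⟩,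
    Zplus_ne_Zminus hq0 hq1 ha', fun _ =>
    ⟨fun z _ => ⟨Zfull_ne_Zplus hq0 hq1 hb, Zfull_ne_Zminus hq0 hq1 hb'⟩,
    fun h => hne.ne (Zplus_injective hq0 hq1 ha hb h),
    Zplus_ne_Zminus hq0 hq1 hb', (Zplus_ne_Zminus hq0 hq1 ha').symm, fun h => ?_,
    Zplus_ne_Zminus hq0 hq1 hb'⟩⟩
  have h1 := Zminus_injective hq0 hq1 ha' hb' h
  rw [← inv_div q w] at h1
  exact hne.ne (inv_injective h1)
end

section
/- Let q be a real number with 0 < q < 1, let c ∈ ℝ, and let Z be an irreducible c-set such that every element z ∈ Z is strictly c-adapted, i.e. c + τ(q·z) > 0 and c + τ(q⁻¹·z) > 0 for all z ∈ Z. Then Z = {z·q^(2n) : n ∈ ℤ} for every z ∈ Z. -/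
/-!
When every element of `Z` is strictly adapted, `Z` is stable under multiplication by `q ^ 2` and
`q ^ (-2)`, so it is a union of orbits `Zfull q z`. Any nonempty subset of `Z` stable under both
shifts is again a `c`-set. If the orbit of some `z ∈ Z` were not all of `Z`, then `Z` would split as
the disjoint union of that orbit and its complement in `Z`, both of them `c`-sets, contradicting
irreducibility.
-/

open Classical

theorem IsCSet.of_subset {q c : ℝ} {Z W : Set ℝ} (hZ : IsCSet q c Z) (hWZ : W ⊆ Z)
    (hne : W.Nonempty) (hup : ∀ x ∈ W, q ^ (2 : ℤ) * x ∈ W)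
    (hdown : ∀ x ∈ W, q ^ (-2 : ℤ) * x ∈ W) : IsCSet q c W :=
  ⟨hne, fun x hx => hZ.2.1 x (hWZ hx), fun x hx => hZ.2.2.1 x (hWZ hx),
    fun x hx _ => hup x hx, fun x hx _ => hdown x hx⟩

theorem mul_up_mem_Zfull {q z x : ℝ} (hq : q ≠ 0) (hx : x ∈ Zfull q z) :
    q ^ (2 : ℤ) * x ∈ Zfull q z := by
  obtain ⟨n, rfl⟩ := hx
  refine ⟨n + 1, ?_⟩
  rw [mul_left_comm, ← zpow_add₀ hq]
  congr 2
  ring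

theorem mul_down_mem_Zfull {q z x : ℝ} (hq : q ≠ 0) (hx : x ∈ Zfull q z) :
    q ^ (-2 : ℤ) * x ∈ Zfull q z := by
  obtain ⟨n, rfl⟩ := hx
  refine ⟨n - 1, ?_⟩
  rw [mul_left_comm, ← zpow_add₀ hq]
  congr 2
  ring

theorem zpow_two_mul_zpow_neg_two_mul {q : ℝ} (hq : q ≠ 0) (x : ℝ) :
    q ^ (2 : ℤ) * (q ^ (-2 : ℤ) * x) = x := by
  rw [← mul_assoc, ← zpow_add₀ hq]
  simp

theorem zpow_neg_two_mul_zpow_two_mul {q : ℝ} (hq : q ≠ 0) (x : ℝ) :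
    q ^ (-2 : ℤ) * (q ^ (2 : ℤ) * x) = x := by
  rw [← mul_assoc, ← zpow_add₀ hq]
  simp

theorem Zfull_subset_of_stable {q z : ℝ} {Z : Set ℝ} (hq : q ≠ 0) (hz : z ∈ Z)
    (hup : ∀ x ∈ Z, q ^ (2 : ℤ) * x ∈ Z) (hdown : ∀ x ∈ Z, q ^ (-2 : ℤ) * x ∈ Z) :
    Zfull q z ⊆ Z := by
  rintro x ⟨n, rfl⟩
  induction n using Int.induction_on with
  | zero => simpa using hz
  | succ n ih =>
    have h := hup _ ih
    rw [mul_left_comm, ← zpow_add₀ hq] at h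
    convert h using 3
    ring
  | pred n ih =>
    have h := hdown _ ih
    rw [mul_left_comm, ← zpow_add₀ hq] at h
    convert h using 3
    ring

theorem irreducible_cSet_strictly_adapted_eq_Zfull (q c : ℝ) (hq0 : 0 < q) (hq1 : q < 1)
    (Z : Set ℝ) (hZ : IsIrreducibleCSet q c Z)
    (hstrict : ∀ z ∈ Z, 0 < c + tau (q * z) ∧ 0 < c + tau (q⁻¹ * z)) :
    ∀ z ∈ Z, Z = Zfull q z := by
  intro z hz
  have hq : q ≠ 0 := hq0.ne'
  obtain ⟨hc, hirr⟩ := hZ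
  have hup : ∀ x ∈ Z, q ^ (2 : ℤ) * x ∈ Z := fun x hx => hc.2.2.2.1 x hx (hstrict x hx).1
  have hdown : ∀ x ∈ Z, q ^ (-2 : ℤ) * x ∈ Z := fun x hx => hc.2.2.2.2 x hx (hstrict x hx).2
  have hsub : Zfull q z ⊆ Z := Zfull_subset_of_stable hq hz hup hdown
  by_contra hne
  have hdiff : (Z \ Zfull q z).Nonempty :=
    Set.sdiff_nonempty.mpr fun h => hne (h.antisymm hsub)
  refine hirr ⟨Zfull q z, Z \ Zfull q z, ?_, ?_, Set.disjoint_sdiff_right,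
    (Set.union_sdiff_cancel hsub).symm⟩
  · exact hc.of_subset hsub ⟨z, 0, by simp⟩ (fun x hx => mul_up_mem_Zfull hq hx)
      fun x hx => mul_down_mem_Zfull hq hx
  · -- A shift cannot enter the orbit from outside, since the inverse shift preserves the orbit.
    refine hc.of_subset Set.sdiff_subset hdiff (fun x hx => ⟨hup x hx.1, fun h => hx.2 ?_⟩)
      fun x hx => ⟨hdown x hx.1, fun h => hx.2 ?_⟩
    · simpa only [zpow_neg_two_mul_zpow_two_mul hq] using mul_down_mem_Zfull hq h
    · simpa only [zpow_two_mul_zpow_neg_two_mul hq] using mul_up_mem_Zfull hq h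
end

section
/- Let q be a real number with 0 < q < 1 and let x > 0. Let k₀ ∈ ℤ be the unique integer such that q < q^(k₀)·x² ≤ 1, and set c₀ = −max{τ(q^(k₀−1)·x²), τ(q^(k₀)·x²)}. Then the set S = {c ∈ ℝ : there exist an irreducible c-set Z with Z ⊆ {x²·qⁿ : n ∈ ℤ} and an irreducible (−c)-set W with W ⊆ {qⁿ : n ∈ ℤ} such that z·w ∈ {x²·q^(2n) : n ∈ ℤ} for all z ∈ Z and w ∈ W} equals the union [c₀, q + q⁻¹] ∪ {τ(qⁿ) : n ∈ ℤ} ∪ {−τ(x²·qⁿ) : n ∈ ℤ}. -/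
/-!
A `c`-set inside an orbit `{a q^(2n+1) : n ∈ ℤ}` is best seen on a path graph: the vertices are the
points `a q^(2n+1)`, and neighbouring vertices are joined by an edge labelled by the point
`a q^(2n)` between them. A `c`-set is a nonempty set of vertices that meets no edge with
`c + τ < 0` and is closed under crossing the edges with `c + τ > 0`.

Hence the orbit contains a `c`-set iff either all edges have `c + τ > 0` or some edge has
`c + τ = 0` (`edgeGood_of_isCSet`, `exists_irreducible_of_edgeGood`). In the first case the whole
orbit is an irreducible `c`-set; in the second, since `τ` increases strictly away from `1`, so is
the half-orbit starting at the zero edge and pointing away from `1`. Irreducibility holds because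
two `c`-sets that are closed under the same shift and lie in one orbit must meet
(`isIrreducibleCSet_of_pos`).

The product condition forces `Z ⊆ {x² q^(k+2n+1)}` and `W ⊆ {q^(k+2n+1)}` for a common `k`, so that
`c` lies in the set iff for some `k` (only its parity matters) the edge criterion holds for `c` at
`x² q^k` and for `-c` at `q^k`. Finally, `τ` is minimal on `{y q^(2n)}` at `y` if `q ≤ y ≤ q⁻¹`
(`tau_le_tau_mul_zpow`); this applies to `y = q^(k₀-1) x²` and `y = q^k₀ x²` for the two classes of
`c`, and to `y = q` for the odd class of `-c`. For the even class of `-c` the bound `τ ≥ 2 = τ(1)`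
is enough.
-/

open Classical

/-- The criterion for the orbit `{a q^(2n+1)}` to contain a `c`-set, in terms of the midpoints
`a q^(2n)` between neighbouring points: `c + τ` is positive at all of them or vanishes at one. -/
def EdgeGood (q c a : ℝ) : Prop :=
  (∀ n : ℤ, 0 < c + tau (a * q ^ (2 * n))) ∨ ∃ n : ℤ, c + tau (a * q ^ (2 * n)) = 0

/-! ### Monotonicity of `τ` -/

lemma tau_mul_sub (a b : ℝ) (ha : a ≠ 0) (hb : b ≠ 0) :
    tau (a * b) - tau a = (b - 1) * (a ^ 2 * b - 1) / (a * b) := by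
  unfold tau
  field_simp
  ring

lemma tau_lt_tau_mul {a b : ℝ} (ha : 0 < a) (hb : 0 < b) (ha1 : a ≤ 1) (hb1 : b < 1) :
    tau a < tau (a * b) := by
  have h := tau_mul_sub a b ha.ne' hb.ne'
  have h2 : a ^ 2 * b < 1 := by nlinarith [pow_le_one₀ ha.le ha1 (n := 2)]
  have : 0 < (b - 1) * (a ^ 2 * b - 1) / (a * b) :=
    div_pos (mul_pos_of_neg_of_neg (by linarith) (by linarith)) (by positivity)
  linarith

lemma tau_le_tau_mul_zpow {q y : ℝ} (hq0 : 0 < q) (hq1 : q < 1) (h1 : q ≤ y) (h2 : y ≤ q⁻¹)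
    (n : ℤ) : tau y ≤ tau (y * q ^ (2 * n)) := by
  have hy : 0 < y := hq0.trans_le h1
  have hb : 0 < q ^ (2 * n) := zpow_pos hq0 _
  have h := tau_mul_sub y _ hy.ne' hb.ne'
  suffices 0 ≤ (q ^ (2 * n) - 1) * (y ^ 2 * q ^ (2 * n) - 1) / (y * q ^ (2 * n)) by linarith
  refine div_nonneg ?_ (by positivity)
  rcases lt_trichotomy n 0 with hn | rfl | hn
  · have hb2 : q ^ (-2 : ℤ) ≤ q ^ (2 * n) := zpow_le_zpow_right_of_le_one₀ hq0 hq1.le (by omega)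
    have hb1 : 1 ≤ q ^ (2 * n) := one_le_zpow_of_nonpos₀ hq0 hq1.le (by omega)
    have : q ^ 2 * q ^ (-2 : ℤ) ≤ y ^ 2 * q ^ (2 * n) := by gcongr
    have e : q ^ 2 * q ^ (-2 : ℤ) = 1 := by
      rw [zpow_neg]
      exact mul_inv_cancel₀ (by positivity)
    exact mul_nonneg (by linarith) (by linarith)
  · simp
  · have hb2 : q ^ (2 * n) ≤ q ^ (2 : ℤ) := zpow_le_zpow_right_of_le_one₀ hq0 hq1.le (by omega)
    have hb1 : q ^ (2 * n) ≤ 1 := zpow_le_one₀ hq0 hq1.le (by omega)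
    have : y ^ 2 * q ^ (2 * n) ≤ (q⁻¹) ^ 2 * q ^ (2 : ℤ) := by gcongr
    have e : (q⁻¹) ^ 2 * q ^ (2 : ℤ) = 1 := by
      rw [inv_pow]
      exact inv_mul_cancel₀ (by positivity)
    exact mul_nonneg_of_nonpos_of_nonpos (by linarith) (by linarith)

/-! ### Construction of irreducible `c`-sets -/

lemma isCSet_inv (q c : ℝ) (Z : Set ℝ) : IsCSet q⁻¹ c Z ↔ IsCSet q c Z := by
  have e1 : (q⁻¹) ^ (2 : ℤ) = q ^ (-2 : ℤ) := by rw [inv_zpow, zpow_neg]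
  have e2 : (q⁻¹) ^ (-2 : ℤ) = q ^ (2 : ℤ) := by rw [inv_zpow, zpow_neg, inv_inv]
  unfold IsCSet
  rw [inv_inv, e1, e2]
  constructor
  · rintro ⟨h1, h2, h3, h4, h5⟩
    exact ⟨h1, h2, fun z hz => (h3 z hz).symm, h5, h4⟩
  · rintro ⟨h1, h2, h3, h4, h5⟩
    exact ⟨h1, h2, fun z hz => (h3 z hz).symm, h5, h4⟩

lemma isIrreducibleCSet_inv (q c : ℝ) (Z : Set ℝ) :
    IsIrreducibleCSet q⁻¹ c Z ↔ IsIrreducibleCSet q c Z := by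
  simp only [IsIrreducibleCSet, isCSet_inv]

/-- A `c`-set inside one orbit on which all shifts by `q²` are strictly allowed is irreducible:
two pieces of a decomposition would both contain a common, sufficiently far shift. -/
lemma isIrreducibleCSet_of_pos {q c u : ℝ} (hq : 0 < q) {Z : Set ℝ} (hZ : IsCSet q c Z)
    (hsub : Z ⊆ Zfull q u) (hpos : ∀ z ∈ Z, 0 < c + tau (q * z)) : IsIrreducibleCSet q c Z := by
  refine ⟨hZ, ?_⟩
  rintro ⟨Z₁, Z₂, h1, h2, hd, rfl⟩
  have up : ∀ Y : Set ℝ, IsCSet q c Y → Y ⊆ Z₁ ∪ Z₂ → ∀ a : ℤ, u * q ^ (2 * a) ∈ Y →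
      ∀ b : ℤ, a ≤ b → u * q ^ (2 * b) ∈ Y := by
    intro Y hY hYs a ha b hab
    induction b, hab using Int.leInduction with
    | base => exact ha
    | succ n _ ih =>
      have := hY.2.2.2.1 _ ih (hpos _ (hYs ih))
      have e : u * q ^ (2 * (n + 1)) = q ^ (2 : ℤ) * (u * q ^ (2 * n)) := by
        rw [mul_add, zpow_add₀ hq.ne', mul_one]
        ring
      rwa [e]
  obtain ⟨z₁, hz₁⟩ := h1.1
  obtain ⟨z₂, hz₂⟩ := h2.1
  obtain ⟨a, rfl⟩ := hsub (Or.inl hz₁)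
  obtain ⟨b, rfl⟩ := hsub (Or.inr hz₂)
  exact Set.disjoint_left.1 hd
    (up Z₁ h1 Set.subset_union_left a hz₁ (max a b) (le_max_left _ _))
    (up Z₂ h2 Set.subset_union_right b hz₂ (max a b) (le_max_right _ _))

/-- The half-orbit starting next to a zero `m` of `c + τ`, in a direction in which `τ` stays above
`τ(m)`. There is no condition `q < 1`, so that replacing `q` by `q⁻¹` gives the other direction. -/
lemma isIrreducibleCSet_Zplus_s10 {q c m : ℝ} (hq : 0 < q) (hm : 0 < m) (h0 : c + tau m = 0)
    (hlt : ∀ n : ℕ, tau m < tau (m * q ^ (2 * (n + 1)))) :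
    IsIrreducibleCSet q c (Zplus q (m * q)) := by
  have eup : ∀ n : ℕ, q * (m * q * q ^ (2 * n)) = m * q ^ (2 * (n + 1)) := fun n => by ring
  have edn : ∀ n : ℕ, q⁻¹ * (m * q * q ^ (2 * n)) = m * q ^ (2 * n) := fun n => by
    field_simp
  have hpos : ∀ z ∈ Zplus q (m * q), 0 < c + tau (q * z) := by
    rintro _ ⟨n, rfl⟩
    rw [eup]
    linarith [hlt n]
  refine isIrreducibleCSet_of_pos (u := m * q) hq
    ⟨⟨m * q, 0, by simp⟩, ?_, ?_, ?_, ?_⟩ ?_ hpos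
  · rintro _ ⟨n, rfl⟩
    positivity
  · intro z hz
    refine ⟨(hpos z hz).le, ?_⟩
    obtain ⟨n, rfl⟩ := hz
    rw [edn]
    cases n with
    | zero => simp [h0]
    | succ n => linarith [hlt n]
  · rintro _ ⟨n, rfl⟩ -
    refine ⟨n + 1, ?_⟩
    rw [zpow_ofNat]
    ring
  · rintro _ ⟨n, rfl⟩ h
    rw [edn] at h
    cases n with
    | zero => simp [h0] at h
    | succ n =>
      refine ⟨n, ?_⟩
      rw [zpow_neg, zpow_ofNat]
      field_simp
      ring
  · rintro _ ⟨n, rfl⟩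
    exact ⟨n, by norm_cast⟩

lemma exists_irreducible_of_edgeGood {q c a : ℝ} (hq0 : 0 < q) (hq1 : q < 1) (ha : 0 < a)
    (h : EdgeGood q c a) :
    ∃ Z, IsIrreducibleCSet q c Z ∧ ∀ z ∈ Z, ∃ n : ℤ, z = a * q ^ (2 * n + 1) := by
  have hq := hq0.ne'
  rcases h with h | ⟨k, hk⟩
  · have eup : ∀ n : ℤ, q * (a * q * q ^ (2 * n)) = a * q ^ (2 * (n + 1)) := fun n => by
      rw [show 2 * (n + 1) = 2 * n + 1 + 1 by ring, zpow_add_one₀ hq, zpow_add_one₀ hq]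
      ring
    have edn : ∀ n : ℤ, q⁻¹ * (a * q * q ^ (2 * n)) = a * q ^ (2 * n) := fun n => by
      field_simp
    have hpos : ∀ z ∈ Zfull q (a * q), 0 < c + tau (q * z) := by
      rintro _ ⟨n, rfl⟩
      rw [eup]
      exact h _
    refine ⟨Zfull q (a * q), isIrreducibleCSet_of_pos (u := a * q) hq0
      ⟨⟨a * q, 0, by simp⟩, ?_, ?_, ?_, ?_⟩ subset_rfl hpos, ?_⟩
    · rintro _ ⟨n, rfl⟩
      positivity
    · intro z hz
      refine ⟨(hpos z hz).le, ?_⟩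
      obtain ⟨n, rfl⟩ := hz
      rw [edn]
      exact (h n).le
    · rintro _ ⟨n, rfl⟩ -
      refine ⟨n + 1, ?_⟩
      rw [mul_add, zpow_add₀ hq, mul_one]
      ring
    · rintro _ ⟨n, rfl⟩ -
      refine ⟨n - 1, ?_⟩
      rw [show 2 * (n - 1) = 2 * n + (-2) by ring, zpow_add₀ hq]
      ring
    · rintro _ ⟨n, rfl⟩
      refine ⟨n, ?_⟩
      rw [zpow_add_one₀ hq]
      ring
  · have hm : 0 < a * q ^ (2 * k) := by positivity
    have hb0 : ∀ n : ℕ, 0 < q ^ (2 * (n + 1)) := fun n => by positivity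
    have hb1 : ∀ n : ℕ, q ^ (2 * (n + 1)) < 1 := fun n => pow_lt_one₀ hq0.le hq1 (by omega)
    rcases le_total (a * q ^ (2 * k)) 1 with h1 | h1
    · refine ⟨_, isIrreducibleCSet_Zplus_s10 hq0 hm hk
        fun n => tau_lt_tau_mul hm (hb0 n) h1 (hb1 n), ?_⟩
      rintro _ ⟨n, rfl⟩
      refine ⟨k + n, ?_⟩
      rw [show 2 * (k + (n : ℤ)) + 1 = 2 * k + 1 + ((2 * n : ℕ) : ℤ) by push_cast; ring,
        zpow_add₀ hq, zpow_add_one₀ hq, zpow_natCast]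
      ring
    · refine ⟨_, (isIrreducibleCSet_inv q c _).1 (isIrreducibleCSet_Zplus_s10 (inv_pos.2 hq0) hm hk
        fun n => ?_), ?_⟩
      · have := tau_lt_tau_mul (inv_pos.2 hm) (hb0 n) (inv_le_one_of_one_le₀ h1) (hb1 n)
        rw [tau_inv] at this
        rwa [← tau_inv (a * q ^ (2 * k) * _), mul_inv, ← inv_pow, inv_inv]
      · rintro _ ⟨n, rfl⟩
        refine ⟨k - 1 - n, ?_⟩
        rw [show 2 * (k - 1 - (n : ℤ)) + 1 = 2 * k - 1 - ((2 * n : ℕ) : ℤ) by push_cast; ring,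
          zpow_sub₀ hq, zpow_sub_one₀ hq, zpow_natCast, inv_pow]
        ring

/-! ### Necessity of the edge criterion -/

/-- If no edge is a zero of `c + τ`, a `c`-set in the orbit can be shifted indefinitely in both
directions, so it is the full orbit and all edges are positive. -/
lemma edgeGood_of_isCSet {q c a : ℝ} (hq0 : 0 < q) {Z : Set ℝ} (hZ : IsCSet q c Z)
    (hsub : ∀ z ∈ Z, ∃ n : ℤ, z = a * q ^ (2 * n + 1)) : EdgeGood q c a := by
  have hq := hq0.ne'
  by_contra hcon
  unfold EdgeGood at hcon
  push Not at hcon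
  obtain ⟨hneg, hne⟩ := hcon
  obtain ⟨hnon, -, hadm, hup, hdn⟩ := hZ
  obtain ⟨z, hz⟩ := hnon
  obtain ⟨k, rfl⟩ := hsub z hz
  have eup : ∀ n : ℤ, q * (a * q ^ (2 * n + 1)) = a * q ^ (2 * (n + 1)) := fun n => by
    rw [show 2 * (n + 1) = 2 * n + 1 + 1 by ring, zpow_add_one₀ hq (2 * n + 1)]
    ring
  have edn : ∀ n : ℤ, q⁻¹ * (a * q ^ (2 * n + 1)) = a * q ^ (2 * n) := fun n => by
    rw [zpow_add_one₀ hq]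
    field_simp
  have hall : ∀ n : ℤ, a * q ^ (2 * n + 1) ∈ Z := by
    intro n
    induction n using Int.inductionOn' (b := k) with
    | zero => exact hz
    | succ n _ ih =>
      have h1 := (hadm _ ih).1
      have h2 := hup _ ih (lt_of_le_of_ne h1 (by rw [eup]; exact (hne _).symm))
      have e : a * q ^ (2 * (n + 1) + 1) = q ^ (2 : ℤ) * (a * q ^ (2 * n + 1)) := by
        rw [show 2 * (n + 1) + 1 = 2 * n + 1 + 2 by ring, zpow_add₀ hq (2 * n + 1)]
        ring
      rwa [e]
    | pred n _ ih =>
      have h1 := (hadm _ ih).2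
      have h2 := hdn _ ih (lt_of_le_of_ne h1 (by rw [edn]; exact (hne _).symm))
      have e : a * q ^ (2 * (n - 1) + 1) = q ^ (-2 : ℤ) * (a * q ^ (2 * n + 1)) := by
        rw [show 2 * (n - 1) + 1 = 2 * n + 1 + (-2) by ring, zpow_add₀ hq (2 * n + 1)]
        ring
      rwa [e]
  obtain ⟨n, hn⟩ := hneg
  have h1 := (hadm _ (hall n)).2
  rw [edn] at h1
  exact hne n (le_antisymm hn h1)

/-! ### The edge criterion for the two parity classes -/

lemma EdgeGood.shift {q c a : ℝ} (hq0 : 0 < q) (h : EdgeGood q c a) (l : ℤ) :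
    EdgeGood q c (a * q ^ (2 * l)) := by
  have e : ∀ n : ℤ, a * q ^ (2 * l) * q ^ (2 * n) = a * q ^ (2 * (l + n)) := fun n => by
    rw [mul_add, zpow_add₀ hq0.ne']
    ring
  rcases h with h | ⟨n, h⟩
  · exact Or.inl fun n => by rw [e]; exact h _
  · exact Or.inr ⟨n - l, by rw [e, add_sub_cancel]; exact h⟩

lemma edgeGood_of_neg_tau_le {q c y : ℝ} (hq0 : 0 < q) (hq1 : q < 1) (h1 : q ≤ y) (h2 : y ≤ q⁻¹)
    (hc : -tau y ≤ c) : EdgeGood q c y := by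
  rcases hc.eq_or_lt with h | h
  · exact Or.inr ⟨0, by simp [← h]⟩
  · exact Or.inl fun n => by linarith [tau_le_tau_mul_zpow hq0 hq1 h1 h2 n]

lemma edgeGood_of_neg_two_lt {q c y : ℝ} (hq0 : 0 < q) (hy : 0 < y) (hc : -2 < c) :
    EdgeGood q c y :=
  Or.inl fun n => by linarith [two_le_tau (mul_pos hy (zpow_pos hq0 (2 * n)))]

/-- The odd exponent `o` serves for `c ≥ -τ(y q^o)`. Any smaller `c` is below `-2`, so that `-c + τ`
is positive everywhere and the other exponent `e` serves, whatever its parity. -/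
lemma exists_edgeGood {q c y : ℝ} (hq0 : 0 < q) (hq1 : q < 1) {o e : ℤ} (ho : Odd o) (hy : 0 < y)
    (ho1 : q ≤ y * q ^ o) (ho2 : y * q ^ o ≤ q⁻¹) (he1 : q ≤ y * q ^ e) (he2 : y * q ^ e ≤ q⁻¹)
    (hc : -max (tau (y * q ^ o)) (tau (y * q ^ e)) ≤ c) (hc2 : c ≤ tau q) :
    ∃ k : ℤ, EdgeGood q c (y * q ^ k) ∧ EdgeGood q (-c) (q ^ k) := by
  by_cases h : -tau (y * q ^ o) ≤ c
  · refine ⟨o, edgeGood_of_neg_tau_le hq0 hq1 ho1 ho2 h, ?_⟩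
    obtain ⟨l, rfl⟩ := ho
    have hqq : EdgeGood q (-c) q := edgeGood_of_neg_tau_le hq0 hq1 le_rfl
      (hq1.le.trans (one_le_inv_iff₀.2 ⟨hq0, hq1.le⟩)) (by linarith)
    have := hqq.shift hq0 l
    rwa [zpow_add_one₀ hq0.ne', mul_comm]
  · have h2 : -tau (y * q ^ e) ≤ c := by
      rcases max_choice (tau (y * q ^ o)) (tau (y * q ^ e)) with h' | h' <;> rw [h'] at hc
      · exact absurd hc h
      · exact hc
    have := two_le_tau (mul_pos hy (zpow_pos hq0 o))
    exact ⟨e, edgeGood_of_neg_tau_le hq0 hq1 he1 he2 h2,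
      edgeGood_of_neg_two_lt hq0 (zpow_pos hq0 e) (by linarith)⟩

/-- Membership in the set of the theorem in terms of midpoints; the product condition says that the
two orbits have exponents of the same parity. -/
lemma exists_sets_iff {q x : ℝ} (hq0 : 0 < q) (hq1 : q < 1) (hx : 0 < x) (c : ℝ) :
    (∃ Z W : Set ℝ,
        IsIrreducibleCSet q c Z ∧ Z ⊆ {y | ∃ n : ℤ, y = x ^ 2 * q ^ n} ∧
        IsIrreducibleCSet q (-c) W ∧ W ⊆ {y | ∃ n : ℤ, y = q ^ n} ∧
        ∀ z ∈ Z, ∀ w ∈ W, ∃ n : ℤ, z * w = x ^ 2 * q ^ (2 * n)) ↔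
      ∃ k : ℤ, EdgeGood q c (x ^ 2 * q ^ k) ∧ EdgeGood q (-c) (q ^ k) := by
  have hq := hq0.ne'
  constructor
  · rintro ⟨Z, W, hZ, -, hW, hWs, hZW⟩
    obtain ⟨w₀, hw₀⟩ := hW.1.1
    obtain ⟨j, rfl⟩ := hWs hw₀
    have hz : ∀ z ∈ Z, ∃ n : ℤ, z = x ^ 2 * q ^ (2 * n - j) := fun z hz => by
      obtain ⟨n, hn⟩ := hZW z hz _ hw₀
      refine ⟨n, ?_⟩
      rw [zpow_sub₀ hq, ← mul_div_assoc, ← hn]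
      field_simp
    obtain ⟨z₀, hz₀⟩ := hZ.1.1
    obtain ⟨m, rfl⟩ := hz z₀ hz₀
    refine ⟨j - 1, edgeGood_of_isCSet hq0 hZ.1 fun z hzZ => ?_,
      edgeGood_of_isCSet hq0 hW.1 fun w hw => ?_⟩
    · obtain ⟨n, rfl⟩ := hz z hzZ
      refine ⟨n - j, ?_⟩
      rw [mul_assoc, ← zpow_add₀ hq]
      congr 2
      ring
    · obtain ⟨n, hn⟩ := hZW _ hz₀ w hw
      refine ⟨n - m, ?_⟩
      rw [mul_assoc, mul_right_inj' (by positivity)] at hn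
      rw [← zpow_add₀ hq, show j - 1 + (2 * (n - m) + 1) = 2 * n - (2 * m - j) by ring,
        zpow_sub₀ hq (2 * n), ← hn]
      field_simp
  · rintro ⟨k, hA, hB⟩
    obtain ⟨Z, hZ, hZs⟩ := exists_irreducible_of_edgeGood hq0 hq1 (by positivity) hA
    obtain ⟨W, hW, hWs⟩ := exists_irreducible_of_edgeGood hq0 hq1 (by positivity) hB
    refine ⟨Z, W, hZ, fun z hz => ?_, hW, fun w hw => ?_, fun z hz w hw => ?_⟩
    · obtain ⟨n, rfl⟩ := hZs z hz
      exact ⟨k + (2 * n + 1), by rw [zpow_add₀ hq k, mul_assoc]⟩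
    · obtain ⟨n, rfl⟩ := hWs w hw
      exact ⟨k + (2 * n + 1), by rw [zpow_add₀ hq k]⟩
    · obtain ⟨n, rfl⟩ := hZs z hz
      obtain ⟨m, rfl⟩ := hWs w hw
      refine ⟨k + n + m + 1, ?_⟩
      rw [mul_assoc, mul_assoc, ← zpow_add₀ hq, ← zpow_add₀ hq, ← zpow_add₀ hq]
      congr 2
      ring

theorem spectrum_of_Casimir (q x : ℝ) (hq0 : 0 < q) (hq1 : q < 1) (hx : 0 < x)
    (k₀ : ℤ) (hk1 : q < q ^ k₀ * x ^ 2) (hk2 : q ^ k₀ * x ^ 2 ≤ 1) :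
    {c : ℝ | ∃ Z W : Set ℝ,
        IsIrreducibleCSet q c Z ∧ Z ⊆ {y | ∃ n : ℤ, y = x ^ 2 * q ^ n} ∧
        IsIrreducibleCSet q (-c) W ∧ W ⊆ {y | ∃ n : ℤ, y = q ^ n} ∧
        ∀ z ∈ Z, ∀ w ∈ W, ∃ n : ℤ, z * w = x ^ 2 * q ^ (2 * n)} =
      Set.Icc (-(max (tau (q ^ (k₀ - 1) * x ^ 2)) (tau (q ^ k₀ * x ^ 2)))) (q + q⁻¹) ∪
      {y | ∃ n : ℤ, y = tau (q ^ n)} ∪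
      {y | ∃ n : ℤ, y = -tau (x ^ 2 * q ^ n)} := by
  have hq := hq0.ne'
  ext c
  rw [Set.mem_ofPred_eq, exists_sets_iff hq0 hq1 hx]
  simp only [mul_comm _ (x ^ 2)]
  constructor
  · rintro ⟨k, hA, hB⟩
    rcases hB with hB | ⟨n, hn⟩
    · rcases hA with hA | ⟨n, hn⟩
      · left; left
        constructor
        · obtain ⟨l, hl⟩ := Int.even_or_odd' (k₀ - k)
          have h := hA l
          rw [mul_assoc, ← zpow_add₀ hq] at h
          rcases hl with hl | hl
          · rw [show k + 2 * l = k₀ by omega] at h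
            linarith [le_max_right (tau (x ^ 2 * q ^ (k₀ - 1))) (tau (x ^ 2 * q ^ k₀))]
          · rw [show k + 2 * l = k₀ - 1 by omega] at h
            linarith [le_max_left (tau (x ^ 2 * q ^ (k₀ - 1))) (tau (x ^ 2 * q ^ k₀))]
        · obtain ⟨l, hl⟩ := Int.even_or_odd' k
          have h := hB (-l)
          rw [← zpow_add₀ hq] at h
          change c ≤ tau q
          rcases hl with hl | hl
          · rw [show k + 2 * -l = 0 by omega, zpow_zero] at h
            have : tau 1 = 2 := by norm_num [tau]
            linarith [two_le_tau hq0]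
          · rw [show k + 2 * -l = 1 by omega, zpow_one] at h
            linarith
      · right
        rw [mul_assoc, ← zpow_add₀ hq] at hn
        exact ⟨k + 2 * n, by linarith⟩
    · left; right
      rw [← zpow_add₀ hq] at hn
      exact ⟨k + 2 * n, by linarith⟩
  · rintro ((⟨h1, h2⟩ | ⟨n, rfl⟩) | ⟨n, rfl⟩)
    · rw [mul_comm] at hk1 hk2
      have hinv : 1 ≤ q⁻¹ := one_le_inv_iff₀.2 ⟨hq0, hq1.le⟩
      have e : x ^ 2 * q ^ (k₀ - 1) = x ^ 2 * q ^ k₀ * q⁻¹ := by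
        rw [zpow_sub_one₀ hq, mul_assoc]
      have a1 : q ≤ x ^ 2 * q ^ (k₀ - 1) := by
        rw [e]
        exact hk1.le.trans (le_mul_of_one_le_right (by positivity) hinv)
      have a2 : x ^ 2 * q ^ (k₀ - 1) ≤ q⁻¹ := by
        rw [e]
        exact mul_le_of_le_one_left (by positivity) hk2
      rcases Int.even_or_odd k₀ with hk | hk
      · exact exists_edgeGood hq0 hq1 (hk.sub_odd odd_one) (by positivity) a1 a2 hk1.le
          (hk2.trans hinv) h1 h2
      · rw [max_comm] at h1
        exact exists_edgeGood hq0 hq1 hk (by positivity) hk1.le (hk2.trans hinv) a1 a2 h1 h2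
    · have := two_le_tau (zpow_pos hq0 n)
      exact ⟨n, edgeGood_of_neg_two_lt hq0 (by positivity) (by linarith),
        Or.inr ⟨0, by simp⟩⟩
    · have := two_le_tau (show 0 < x ^ 2 * q ^ n by positivity)
      exact ⟨n, Or.inr ⟨0, by simp⟩,
        edgeGood_of_neg_two_lt hq0 (by positivity) (by linarith)⟩
end

section
/- Let q be a real number with 0 < q < 1 and let x > 0. Let k₀ ∈ ℤ be the unique integer such that q < q^(k₀)·x² ≤ 1, and set c₀ = −max{τ(q^(k₀−1)·x²), τ(q^(k₀)·x²)}. Let c ≤ −2 and let w ∈ (0,1] satisfy τ(w) = −c. Then there exists an irreducible c-set contained in {x²·qⁿ : n ∈ ℤ} if and only if c₀ < c or −c = τ(x²·qⁿ) for some n ∈ ℤ. -/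
/-!
Regard `z` and `q² z` as joined by an edge with midpoint `m = q z`. A `c`-set never touches an edge
with `c + τ(m) < 0` and is closed under crossing an edge with `c + τ(m) > 0`; an edge with
`c + τ(m) = 0` need not be crossed. In `Λ = x² q^ℤ` both the vertices and the midpoints lie in `Λ`.

If no midpoint in `Λ` gives `c + τ = 0`, every edge at a vertex of a `c`-set in `Λ` is strict,
so the `c`-set contains a whole coset of `q^(2ℤ)`, and all midpoints of the opposite parity satisfy `c + τ > 0`. One of the
exponents `k₀ - 1`, `k₀` has that parity, which gives `c₀ < c`.

Conversely, `q^(k₀) x²` and `q^(k₀ - 1) x²` lie in `(q, q⁻¹]`, so each of them minimises `τ` on its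
coset of `q^(2ℤ)` (`tau_le_coset`). Hence `c₀ < c` makes all edges of one parity strict, and the
corresponding coset is an irreducible `c`-set (`irreducible_full`). If instead `τ(u) = -c` with
`u ∈ Λ`, then the half-line of vertices starting at the edge with midpoint `u` and pointing away
from `1` is an irreducible `c`-set (`irreducible_half`).
-/

open Classical

theorem tau_mul_sub_s12 {y t : ℝ} (hy : 0 < y) (ht : 0 < t) :
    tau (y * t) - tau y = (t - 1) * (y ^ 2 * t - 1) / (y * t) := by
  unfold tau
  field_simp
  ring

theorem tau_le_tau_mul {y t : ℝ} (hy : 0 < y) (ht : 0 < t)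
    (h : 0 ≤ (t - 1) * (y ^ 2 * t - 1)) : tau y ≤ tau (y * t) := by
  have h1 := tau_mul_sub_s12 hy ht
  have h2 : 0 ≤ (t - 1) * (y ^ 2 * t - 1) / (y * t) := by positivity
  linarith

theorem tau_lt_tau_mul_s12 {y t : ℝ} (hy : 0 < y) (ht : 0 < t)
    (h : 0 < (t - 1) * (y ^ 2 * t - 1)) : tau y < tau (y * t) := by
  have h1 := tau_mul_sub_s12 hy ht
  have h2 : 0 < (t - 1) * (y ^ 2 * t - 1) / (y * t) := by positivity
  linarith

/-- The notion of `c`-set is invariant under `q ↦ q⁻¹`, which exchanges the two signs `ε`. -/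
theorem IsCSet.of_inv {q c : ℝ} {Z : Set ℝ} (h : IsCSet q⁻¹ c Z) : IsCSet q c Z := by
  obtain ⟨h1, h2, h3, h4, h5⟩ := h
  simp only [inv_inv, inv_zpow', neg_neg] at h3 h4 h5
  exact ⟨h1, h2, fun z hz => ⟨(h3 z hz).2, (h3 z hz).1⟩, h5, h4⟩

theorem IsIrreducibleCSet.of_inv {q c : ℝ} {Z : Set ℝ} (h : IsIrreducibleCSet q⁻¹ c Z) :
    IsIrreducibleCSet q c Z := by
  refine ⟨h.1.of_inv, ?_⟩
  rintro ⟨Z₁, Z₂, h1, h2, h3⟩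
  exact h.2 ⟨Z₁, Z₂, .of_inv (by rwa [inv_inv]), .of_inv (by rwa [inv_inv]), h3⟩

/-- A `c`-set is irreducible as soon as all its `c`-subsets share a common point. -/
theorem irreducible_of_common {q c : ℝ} {Z : Set ℝ} (hZ : IsCSet q c Z) (a : ℝ)
    (h : ∀ W, IsCSet q c W → W ⊆ Z → a ∈ W) : IsIrreducibleCSet q c Z := by
  refine ⟨hZ, ?_⟩
  rintro ⟨Z₁, Z₂, h1, h2, hd, rfl⟩
  exact Set.disjoint_left.1 hd (h _ h1 Set.subset_union_left) (h _ h2 Set.subset_union_right)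

/-- If all midpoints `u s^(2k)` of a coset are strict, the coset of `u s` is an irreducible
`c`-set. -/
theorem irreducible_full {s c u : ℝ} (hs : 0 < s) (hu : 0 < u)
    (h : ∀ k : ℤ, 0 < c + tau (u * s ^ (2 * k))) :
    IsIrreducibleCSet s c {z | ∃ k : ℤ, z = u * s ^ (2 * k + 1)} := by
  have e1 (k : ℤ) : s * (u * s ^ (2 * k + 1)) = u * s ^ (2 * (k + 1)) := by
    rw [show 2 * (k + 1) = 2 * k + 1 + 1 by ring, zpow_add_one₀ hs.ne' (2 * k + 1)]; ring
  have e2 (k : ℤ) : s⁻¹ * (u * s ^ (2 * k + 1)) = u * s ^ (2 * k) := by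
    rw [zpow_add_one₀ hs.ne']; field_simp
  have e3 (k : ℤ) : s ^ (2 : ℤ) * (u * s ^ (2 * k + 1)) = u * s ^ (2 * (k + 1) + 1) := by
    rw [show 2 * (k + 1) + 1 = 2 + (2 * k + 1) by ring, zpow_add₀ hs.ne' 2]; ring
  have e4 (k : ℤ) : s ^ (-2 : ℤ) * (u * s ^ (2 * k + 1)) = u * s ^ (2 * (k - 1) + 1) := by
    rw [show 2 * (k - 1) + 1 = -2 + (2 * k + 1) by ring, zpow_add₀ hs.ne' (-2)]; ring
  refine irreducible_of_common ⟨⟨_, 0, rfl⟩, ?_, ?_, ?_, ?_⟩ (u * s ^ (2 * (0 : ℤ) + 1)) ?_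
  · rintro _ ⟨k, rfl⟩; positivity
  · rintro _ ⟨k, rfl⟩
    rw [e1, e2]
    exact ⟨(h _).le, (h _).le⟩
  · rintro _ ⟨k, rfl⟩ -
    exact ⟨k + 1, e3 k⟩
  · rintro _ ⟨k, rfl⟩ -
    exact ⟨k - 1, e4 k⟩
  · rintro W ⟨⟨z, hz⟩, -, -, hp, hm⟩ hWZ
    obtain ⟨k, rfl⟩ := hWZ hz
    induction k using Int.induction_on with
    | zero => exact hz
    | succ k ih =>
      have := hm _ hz (by rw [e2]; exact h _)
      rw [e4, add_sub_cancel_right] at this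
      exact ih this
    | pred k ih =>
      have := hp _ hz (by rw [e1]; exact h _)
      rw [e3, sub_add_cancel] at this
      exact ih this

/-- If the edge with midpoint `u` has value zero and the edges with midpoints `u s^(2k)`, `k > 0`,
are strict, the half-line `{u s^(2k+1) : k ∈ ℕ}` is an irreducible `c`-set. -/
theorem irreducible_half {s c u : ℝ} (hs : 0 < s) (hu : 0 < u) (h0 : c + tau u = 0)
    (h : ∀ k : ℕ, 0 < c + tau (u * s ^ (2 * (k + 1)))) :
    IsIrreducibleCSet s c {z | ∃ k : ℕ, z = u * s ^ (2 * k + 1)} := by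
  have e1 (k : ℕ) : s * (u * s ^ (2 * k + 1)) = u * s ^ (2 * (k + 1)) := by ring
  have e2 (k : ℕ) : s⁻¹ * (u * s ^ (2 * k + 1)) = u * s ^ (2 * k) := by
    rw [pow_succ]; field_simp
  have e3 (k : ℕ) : s ^ (2 : ℤ) * (u * s ^ (2 * k + 1)) = u * s ^ (2 * (k + 1) + 1) := by
    rw [zpow_ofNat]; ring
  have e4 (k : ℕ) : s ^ (-2 : ℤ) * (u * s ^ (2 * (k + 1) + 1)) = u * s ^ (2 * k + 1) := by
    rw [zpow_neg, zpow_ofNat]; field_simp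
    ring
  refine irreducible_of_common ⟨⟨_, 0, rfl⟩, ?_, ?_, ?_, ?_⟩ (u * s ^ (2 * 0 + 1)) ?_
  · rintro _ ⟨k, rfl⟩; positivity
  · rintro _ ⟨k, rfl⟩
    rw [e1, e2]
    refine ⟨(h _).le, ?_⟩
    cases k with
    | zero => simp [h0]
    | succ k => exact (h k).le
  · rintro _ ⟨k, rfl⟩ -
    exact ⟨k + 1, e3 k⟩
  · rintro _ ⟨k, rfl⟩ hk
    cases k with
    | zero => rw [e2] at hk; simp [h0] at hk
    | succ k => exact ⟨k, e4 k⟩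
  · rintro W ⟨⟨z, hz⟩, -, -, -, hm⟩ hWZ
    obtain ⟨k, rfl⟩ := hWZ hz
    induction k with
    | zero => exact hz
    | succ k ih =>
      have := hm _ hz (by rw [e2]; exact h _)
      rw [e4] at this
      exact ih this

/-- A point of the interval `[q, q⁻¹]` minimises `τ` on its coset of `q^(2ℤ)`. -/
theorem tau_le_coset {q y : ℝ} (hq0 : 0 < q) (hq1 : q < 1) (hy1 : q ≤ y) (hy2 : y * q ≤ 1)
    (k : ℤ) : tau y ≤ tau (y * q ^ (2 * k)) := by
  have hy : 0 < y := hq0.trans_le hy1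
  refine tau_le_tau_mul hy (by positivity) ?_
  have hanti : ∀ {m n : ℤ}, m ≤ n → q ^ n ≤ q ^ m := fun hmn =>
    zpow_le_zpow_right_of_le_one₀ hq0 hq1.le hmn
  rcases lt_trichotomy k 0 with hk | rfl | hk
  · have h1 : q ^ (-2 : ℤ) ≤ q ^ (2 * k) := hanti (by lia)
    have h2 : 1 ≤ q ^ (2 * k) := by simpa using hanti (m := 2 * k) (n := 0) (by lia)
    have h3 : y ^ 2 * q ^ (-2 : ℤ) ≤ y ^ 2 * q ^ (2 * k) := by gcongr
    have h4 : 1 ≤ y ^ 2 * q ^ (-2 : ℤ) := by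
      rw [zpow_neg, zpow_ofNat, ← div_eq_mul_inv, one_le_div (by positivity)]
      gcongr
    exact mul_nonneg (by linarith) (by linarith)
  · simp
  · have h1 : q ^ (2 * k) ≤ q ^ (2 : ℤ) := hanti (by lia)
    have h2 : q ^ (2 * k) ≤ 1 := by simpa using hanti (m := 0) (n := 2 * k) (by lia)
    have h3 : y ^ 2 * q ^ (2 * k) ≤ y ^ 2 * q ^ (2 : ℤ) := by gcongr
    have h4 : y ^ 2 * q ^ (2 : ℤ) ≤ 1 := by
      rw [zpow_ofNat, ← mul_pow]
      exact pow_le_one₀ (by positivity) hy2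
    exact mul_nonneg_of_nonpos_of_nonpos (by linarith) (by linarith)

theorem exists_irreducible_cSet_in_Lambda_x_sq_iff (q x c w : ℝ) (hq0 : 0 < q) (hq1 : q < 1)
    (hx : 0 < x) (k₀ : ℤ) (hk1 : q < q ^ k₀ * x ^ 2) (hk2 : q ^ k₀ * x ^ 2 ≤ 1)
    (hc : c ≤ -2) (hw0 : 0 < w) (hw1 : w ≤ 1) (hwc : tau w = -c) :
    (∃ Z : Set ℝ, IsIrreducibleCSet q c Z ∧ Z ⊆ {y | ∃ n : ℤ, y = x ^ 2 * q ^ n}) ↔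
      (-(max (tau (q ^ (k₀ - 1) * x ^ 2)) (tau (q ^ k₀ * x ^ 2))) < c ∨
        ∃ n : ℤ, -c = tau (x ^ 2 * q ^ n)) := by
  have e1 (n : ℤ) : q * (x ^ 2 * q ^ n) = x ^ 2 * q ^ (n + 1) := by
    rw [zpow_add_one₀ hq0.ne']; ring
  have e2 (n : ℤ) : q⁻¹ * (x ^ 2 * q ^ n) = x ^ 2 * q ^ (n - 1) := by
    rw [zpow_sub_one₀ hq0.ne']; ring
  have e3 (m n : ℤ) : q ^ m * (x ^ 2 * q ^ n) = x ^ 2 * q ^ (n + m) := by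
    rw [zpow_add₀ hq0.ne']; ring
  constructor
  · rintro ⟨Z, ⟨⟨⟨z, hz⟩, -, hadapt, hp, hm⟩, -⟩, hZ⟩
    by_cases hex : ∃ n : ℤ, -c = tau (x ^ 2 * q ^ n)
    · exact .inr hex
    left
    push Not at hex
    obtain ⟨n, rfl⟩ := hZ hz
    have hstep : ∀ j : ℤ, x ^ 2 * q ^ j ∈ Z →
        0 < c + tau (x ^ 2 * q ^ (j + 1)) ∧ 0 < c + tau (x ^ 2 * q ^ (j - 1)) := by
      intro j hj
      have h := hadapt _ hj
      rw [e1, e2] at h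
      exact ⟨lt_of_le_of_ne h.1 fun h' => hex (j + 1) (by linarith),
        lt_of_le_of_ne h.2 fun h' => hex (j - 1) (by linarith)⟩
    have hall : ∀ k : ℤ, x ^ 2 * q ^ (n + 2 * k) ∈ Z := by
      intro k
      induction k using Int.induction_on with
      | zero => simpa using hz
      | succ k ih =>
        have := hp _ ih (by rw [e1]; exact (hstep _ ih).1)
        rw [e3] at this
        convert this using 3; ring
      | pred k ih =>
        have := hm _ ih (by rw [e2]; exact (hstep _ ih).2)
        rw [e3] at this
        convert this using 3; ring
    rw [neg_lt, lt_max_iff]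
    -- The midpoint exponents `n + 1 + 2k` cover exactly one of `k₀ - 1` and `k₀`.
    rcases Int.even_or_odd (k₀ - n) with ⟨k, hk⟩ | ⟨k, hk⟩
    · left
      have := (hstep _ (hall k)).2
      rw [show n + 2 * k - 1 = k₀ - 1 by lia, mul_comm] at this
      linarith
    · right
      have := (hstep _ (hall k)).1
      rw [show n + 2 * k + 1 = k₀ by lia, mul_comm] at this
      linarith
  · rintro (h | ⟨n, hn⟩)
    · have key : ∀ a : ℤ, q ≤ x ^ 2 * q ^ a → x ^ 2 * q ^ a * q ≤ 1 → -c < tau (x ^ 2 * q ^ a) →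
          ∃ Z : Set ℝ, IsIrreducibleCSet q c Z ∧ Z ⊆ {y | ∃ n : ℤ, y = x ^ 2 * q ^ n} := by
        intro a h1 h2 h3
        refine ⟨_, irreducible_full hq0 (u := x ^ 2 * q ^ a) (by positivity) fun k => ?_, ?_⟩
        · have := tau_le_coset hq0 hq1 h1 h2 k
          linarith
        · rintro _ ⟨k, rfl⟩
          exact ⟨a + (2 * k + 1), by rw [zpow_add₀ hq0.ne' a]; ring⟩
      rw [mul_comm] at hk1 hk2
      rw [neg_lt, lt_max_iff, mul_comm, mul_comm (q ^ k₀)] at h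
      have hback : x ^ 2 * q ^ (k₀ - 1) * q = x ^ 2 * q ^ k₀ := by
        rw [zpow_sub_one₀ hq0.ne']; field_simp
      rcases h with h | h
      · refine key (k₀ - 1) ?_ (hback ▸ hk2) h
        have : 0 < x ^ 2 * q ^ (k₀ - 1) := by positivity
        nlinarith
      · refine key k₀ hk1.le ?_ h
        nlinarith
    · set u := x ^ 2 * q ^ n with hu_def
      have hu : 0 < u := by positivity
      rcases le_total u 1 with h1 | h1
      · refine ⟨_, irreducible_half hq0 hu (by linarith) fun k => ?_, ?_⟩
        · have ht : q ^ (2 * (k + 1)) < 1 := pow_lt_one₀ hq0.le hq1 (by lia)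
          have ht0 : 0 < q ^ (2 * (k + 1)) := by positivity
          have hu2 : u ^ 2 ≤ 1 := pow_le_one₀ hu.le h1
          have := tau_lt_tau_mul_s12 hu ht0
            (mul_pos_of_neg_of_neg (by linarith) (by nlinarith))
          linarith
        · rintro _ ⟨k, rfl⟩
          refine ⟨n + (2 * k + 1 : ℕ), ?_⟩
          rw [zpow_add₀ hq0.ne', zpow_natCast, hu_def, mul_assoc]
      · have hs : 0 < q⁻¹ := by positivity
        refine ⟨_, (irreducible_half hs hu (by linarith) fun k => ?_).of_inv, ?_⟩
        · have ht : 1 < q⁻¹ ^ (2 * (k + 1)) :=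
            one_lt_pow₀ ((one_lt_inv₀ hq0).2 hq1) (by lia)
          have hu2 : 1 ≤ u ^ 2 := one_le_pow₀ h1
          have := tau_lt_tau_mul_s12 hu (by positivity : 0 < q⁻¹ ^ (2 * (k + 1)))
            (mul_pos (by linarith) (by nlinarith))
          linarith
        · rintro _ ⟨k, rfl⟩
          refine ⟨n - (2 * k + 1 : ℕ), ?_⟩
          rw [zpow_sub₀ hq0.ne', zpow_natCast, hu_def, inv_pow, mul_assoc, div_eq_mul_inv]
end

section
/- Let q be a real number with 0 < q < 1, let c ≤ −2 and let w ∈ (0,1] satisfy τ(w) = −c. Then there exists an irreducible c-set contained in {qⁿ : n ∈ ℤ} if and only if q < w or w = qⁿ for some n ∈ ℕ. -/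
/-!
Since `c = -τ(w)`, the sign of `c + τ(y)` is that of `(w - y)(1 - y w)`: it is positive for
`y < w` or `y > w⁻¹`, zero for `y = w^{±1}`, and negative in between (`c_add_tau_eq`).
Write elements of `q^ℤ` as `q ^ n`. Then `q ^ n` is adapted iff the two neighbouring values
`c + τ(q ^ (n ± 1))` are nonnegative, and whenever such a value is positive, a `c`-set containing
`q ^ n` also contains `q ^ (n ± 2)`.

* If `q < w`, all `c + τ(q ^ m)` with `m` odd are positive, so `{q ^ (2k) : k ∈ ℤ}` is a `c`-set.
* If `w = q ^ n`, then `c + τ(q ^ m)` vanishes at `m = n` and is positive for `m > n`, so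
  `{q ^ (n + 1 + 2k) : k ∈ ℕ}` is a `c`-set.

In both cases one can walk from any point to a fixed base point by strictly adapted steps, so every
`c`-subset contains the base point and no two of them are disjoint
(`IsCSet.irreducible_of_forall_mem`).

Conversely, if `w ≤ q` and `w` is not a power of `q`, then `c + τ` never vanishes on `q^ℤ`. So a
`c`-set inside `q^ℤ` is stable under `q ^ n ↦ q ^ (n ± 2)`, hence contains `1` or `q`; but these
are not adapted, because `c + τ(q) < 0` and `c + τ(1) < 0`.
-/

open Classical

lemma c_add_tau_eq {c w y : ℝ} (hw : 0 < w) (hwc : tau w = -c) (hy : 0 < y) :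
    c + tau y = (w - y) * (1 - y * w) / (y * w) := by
  have : c = -tau w := by linarith
  rw [this]
  unfold tau
  field_simp
  ring

lemma c_add_tau_pos {c w y : ℝ} (hw : 0 < w) (hw1 : w ≤ 1) (hwc : tau w = -c) (hy : 0 < y)
    (hyw : y < w) : 0 < c + tau y := by
  rw [c_add_tau_eq hw hwc hy]
  have : y * w < 1 := by nlinarith
  have h1 : 0 < w - y := by linarith
  have h2 : 0 < 1 - y * w := by linarith
  positivity

lemma c_add_tau_neg {c w y : ℝ} (hw : 0 < w) (hwc : tau w = -c) (hy1 : y ≤ 1)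
    (hwy : w < y) : c + tau y < 0 := by
  have hy : 0 < y := hw.trans hwy
  rw [c_add_tau_eq hw hwc hy]
  have h2 : 0 < 1 - y * w := by nlinarith
  exact div_neg_of_neg_of_pos (mul_neg_of_neg_of_pos (by linarith) h2) (by positivity)

lemma tau_zpow_neg (q : ℝ) (n : ℤ) : tau (q ^ (-n)) = tau (q ^ n) := by
  unfold tau
  rw [zpow_neg, inv_inv, add_comm]

lemma tau_mul_zpow {q : ℝ} (hq : q ≠ 0) (n : ℤ) :
    tau (q * q ^ n) = tau (q ^ (n + 1)) ∧ tau (q⁻¹ * q ^ n) = tau (q ^ (n - 1)) := by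
  rw [zpow_add_one₀ hq, zpow_sub_one₀ hq, mul_comm q, mul_comm q⁻¹]
  exact ⟨rfl, rfl⟩

/-- The `c`-set conditions for a subset of `q^ℤ`, expressed through the set `S` of exponents. -/
lemma isCSet_image_zpow {q c : ℝ} (hq : 0 < q) {S : Set ℤ} (hS : S.Nonempty)
    (h1 : ∀ n ∈ S, 0 ≤ c + tau (q ^ (n + 1)) ∧ 0 ≤ c + tau (q ^ (n - 1)))
    (h2 : ∀ n ∈ S, 0 < c + tau (q ^ (n + 1)) → n + 2 ∈ S)
    (h3 : ∀ n ∈ S, 0 < c + tau (q ^ (n - 1)) → n - 2 ∈ S) :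
    IsCSet q c ((fun n : ℤ => q ^ n) '' S) := by
  refine ⟨hS.image _, ?_, ?_, ?_, ?_⟩
  · rintro _ ⟨n, -, rfl⟩
    exact zpow_pos hq n
  · rintro _ ⟨n, hn, rfl⟩
    simpa only [tau_mul_zpow hq.ne'] using h1 n hn
  · rintro _ ⟨n, hn, rfl⟩ h
    refine ⟨n + 2, h2 n hn (by simpa only [tau_mul_zpow hq.ne'] using h), ?_⟩
    simp only [← zpow_add₀ hq.ne', add_comm]
  · rintro _ ⟨n, hn, rfl⟩ h
    refine ⟨n - 2, h3 n hn (by simpa only [tau_mul_zpow hq.ne'] using h), ?_⟩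
    simp only [← zpow_add₀ hq.ne']
    congr 1
    ring

lemma IsCSet.zpow_add_two_mem {q c : ℝ} {Z : Set ℝ} (hZ : IsCSet q c Z) (hq : 0 < q) {n : ℤ}
    (hn : q ^ n ∈ Z) (h : 0 < c + tau (q ^ (n + 1))) : q ^ (n + 2) ∈ Z := by
  have := hZ.2.2.2.1 _ hn (by rwa [(tau_mul_zpow hq.ne' n).1])
  rwa [← zpow_add₀ hq.ne', add_comm] at this

lemma IsCSet.zpow_sub_two_mem {q c : ℝ} {Z : Set ℝ} (hZ : IsCSet q c Z) (hq : 0 < q) {n : ℤ}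
    (hn : q ^ n ∈ Z) (h : 0 < c + tau (q ^ (n - 1))) : q ^ (n - 2) ∈ Z := by
  have := hZ.2.2.2.2 _ hn (by rwa [(tau_mul_zpow hq.ne' n).2])
  rwa [← zpow_add₀ hq.ne', add_comm, ← sub_eq_add_neg] at this

/-- If all `c`-subsets of a `c`-set share a point, no two of them are disjoint. -/
lemma IsCSet.irreducible_of_forall_mem {q c x : ℝ} {Z : Set ℝ} (hZ : IsCSet q c Z)
    (h : ∀ Z', IsCSet q c Z' → Z' ⊆ Z → x ∈ Z') : IsIrreducibleCSet q c Z := by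
  refine ⟨hZ, ?_⟩
  rintro ⟨Z₁, Z₂, h1, h2, hd, rfl⟩
  exact Set.disjoint_left.mp hd (h Z₁ h1 Set.subset_union_left) (h Z₂ h2 Set.subset_union_right)

lemma exists_irreducible_of_lt {q c w : ℝ} (hq0 : 0 < q) (hq1 : q < 1) (hw0 : 0 < w)
    (hw1 : w ≤ 1) (hwc : tau w = -c) (hqw : q < w) :
    ∃ Z : Set ℝ, IsIrreducibleCSet q c Z ∧ Z ⊆ {y | ∃ n : ℤ, y = q ^ n} := by
  have hpos : ∀ m : ℤ, 1 ≤ m → 0 < c + tau (q ^ m) := fun m hm => by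
    refine c_add_tau_pos hw0 hw1 hwc (zpow_pos hq0 m) (lt_of_le_of_lt ?_ hqw)
    simpa using zpow_le_zpow_right_of_le_one₀ hq0 hq1.le hm
  have hodd : ∀ m : ℤ, m ≠ 0 → 0 < c + tau (q ^ m) := fun m hm => by
    rcases lt_or_gt_of_ne hm with h | h
    · rw [← tau_zpow_neg]
      exact hpos _ (by omega)
    · exact hpos m h
  have hZ : IsCSet q c ((fun n : ℤ => q ^ n) '' {n | Even n}) := by
    refine isCSet_image_zpow hq0 ⟨0, by simp⟩ ?_ ?_ ?_
    · rintro n ⟨k, rfl⟩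
      exact ⟨(hodd _ (by omega)).le, (hodd _ (by omega)).le⟩
    · rintro n ⟨k, rfl⟩ -
      exact ⟨k + 1, by ring⟩
    · rintro n ⟨k, rfl⟩ -
      exact ⟨k - 1, by ring⟩
  refine ⟨_, hZ.irreducible_of_forall_mem (x := q ^ (0 : ℤ)) ?_, ?_⟩
  · intro Z' hZ' hsub
    obtain ⟨x, hx⟩ := hZ'.1
    obtain ⟨_, ⟨k, rfl⟩, rfl⟩ := hsub hx
    have key : ∀ k : ℤ, q ^ (k + k) ∈ Z' → q ^ (0 : ℤ) ∈ Z' := by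
      intro k
      induction k using Int.induction_on with
      | zero => simp
      | succ i ih =>
        intro h
        refine ih ?_
        have := hZ'.zpow_sub_two_mem hq0 h (hodd _ (by omega))
        convert this using 2
        ring
      | pred i ih =>
        intro h
        refine ih ?_
        have := hZ'.zpow_add_two_mem hq0 h (hodd _ (by omega))
        convert this using 2
        ring
    exact key k hx
  · rintro _ ⟨n, -, rfl⟩
    exact ⟨n, rfl⟩

lemma exists_irreducible_of_eq_pow {q c w : ℝ} (hq0 : 0 < q) (hq1 : q < 1) (hw0 : 0 < w)
    (hw1 : w ≤ 1) (hwc : tau w = -c) {n : ℕ} (hn : w = q ^ n) :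
    ∃ Z : Set ℝ, IsIrreducibleCSet q c Z ∧ Z ⊆ {y | ∃ n : ℤ, y = q ^ n} := by
  have hzero : c + tau (q ^ (n : ℤ)) = 0 := by
    rw [zpow_natCast, ← hn, hwc]
    ring
  have hpos : ∀ m : ℤ, n < m → 0 < c + tau (q ^ m) := fun m hm => by
    refine c_add_tau_pos hw0 hw1 hwc (zpow_pos hq0 m) ?_
    rw [hn, ← zpow_natCast]
    exact zpow_lt_zpow_right_of_lt_one₀ hq0 hq1 hm
  have hnn : ∀ m : ℤ, n ≤ m → 0 ≤ c + tau (q ^ m) := fun m hm => by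
    rcases hm.eq_or_lt with rfl | h
    · exact hzero.ge
    · exact (hpos m h).le
  have hZ : IsCSet q c ((fun m : ℤ => q ^ m) '' {m | ∃ k : ℕ, m = n + 1 + 2 * k}) := by
    refine isCSet_image_zpow hq0 ⟨n + 1, 0, by simp⟩ ?_ ?_ ?_
    · rintro m ⟨k, rfl⟩
      exact ⟨hnn _ (by omega), hnn _ (by omega)⟩
    · rintro m ⟨k, rfl⟩ -
      exact ⟨k + 1, by push_cast; ring⟩
    · rintro m ⟨k, rfl⟩ h
      rcases k with _ | k
      · simp only [Nat.cast_zero, mul_zero, add_zero, add_sub_cancel_right] at h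
        exact absurd h hzero.le.not_gt
      · exact ⟨k, by push_cast; ring⟩
  refine ⟨_, hZ.irreducible_of_forall_mem (x := q ^ ((n : ℤ) + 1)) ?_, ?_⟩
  · intro Z' hZ' hsub
    obtain ⟨x, hx⟩ := hZ'.1
    obtain ⟨_, ⟨k, rfl⟩, rfl⟩ := hsub hx
    have key : ∀ k : ℕ, q ^ ((n : ℤ) + 1 + 2 * k) ∈ Z' → q ^ ((n : ℤ) + 1) ∈ Z' := by
      intro k
      induction k with
      | zero => simp
      | succ i ih =>
        intro h
        refine ih ?_
        have := hZ'.zpow_sub_two_mem hq0 h (hpos _ (by omega))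
        convert this using 2
        push_cast
        ring
    exact key k hx
  · rintro _ ⟨m, -, rfl⟩
    exact ⟨m, rfl⟩

lemma not_isCSet_of_le {q c w : ℝ} (hq0 : 0 < q) (hq1 : q < 1) (hw0 : 0 < w)
    (hw1 : w ≤ 1) (hwc : tau w = -c) (hwq : w ≤ q) (hne : ∀ n : ℕ, w ≠ q ^ n) {Z : Set ℝ}
    (hZ : IsCSet q c Z) (hsub : Z ⊆ {y | ∃ n : ℤ, y = q ^ n}) : False := by
  have hwq' : w < q := lt_of_le_of_ne hwq (by simpa using hne 1)
  have hnat : ∀ n : ℕ, c + tau (q ^ (n : ℤ)) ≠ 0 := fun n => by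
    rw [zpow_natCast]
    rcases lt_or_gt_of_ne (hne n) with h | h
    · exact (c_add_tau_neg hw0 hwc (pow_le_one₀ hq0.le hq1.le) h).ne
    · exact (c_add_tau_pos hw0 hw1 hwc (pow_pos hq0 n) h).ne'
  have hint : ∀ m : ℤ, c + tau (q ^ m) ≠ 0 := fun m => by
    obtain ⟨n, rfl | rfl⟩ := m.eq_nat_or_neg
    · exact hnat n
    · rw [tau_zpow_neg]
      exact hnat n
  have hadapt : ∀ m : ℤ, q ^ m ∈ Z → 0 < c + tau (q ^ (m + 1)) ∧ 0 < c + tau (q ^ (m - 1)) :=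
    fun m hm => by
      have := hZ.2.2.1 _ hm
      rw [(tau_mul_zpow hq0.ne' m).1, (tau_mul_zpow hq0.ne' m).2] at this
      exact ⟨this.1.lt_of_ne' (hint _), this.2.lt_of_ne' (hint _)⟩
  have h0 : q ^ (0 : ℤ) ∉ Z := fun h => by
    have := (hadapt 0 h).1
    simp only [zero_add, zpow_one] at this
    exact this.not_gt (c_add_tau_neg hw0 hwc hq1.le hwq')
  have h1 : q ^ (1 : ℤ) ∉ Z := fun h => by
    have := (hadapt 1 h).2
    simp only [sub_self, zpow_zero] at this
    exact this.not_gt (c_add_tau_neg hw0 hwc le_rfl (hwq'.trans hq1))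
  have key : ∀ r : ℤ, q ^ r ∉ Z → ∀ k : ℤ, q ^ (r + 2 * k) ∉ Z := by
    intro r hr k
    induction k using Int.induction_on with
    | zero => simpa using hr
    | succ i ih =>
      intro h
      refine ih ?_
      have := hZ.zpow_sub_two_mem hq0 h (hadapt _ h).2
      convert this using 2
      ring
    | pred i ih =>
      intro h
      refine ih ?_
      have := hZ.zpow_add_two_mem hq0 h (hadapt _ h).1
      convert this using 2
      ring
  obtain ⟨x, hx⟩ := hZ.1
  obtain ⟨n, rfl⟩ := hsub hx
  rcases Int.emod_two_eq_zero_or_one n with h | h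
  · refine key 0 h0 (n / 2) ?_
    rwa [show 0 + 2 * (n / 2) = n by omega]
  · refine key 1 h1 (n / 2) ?_
    rwa [show 1 + 2 * (n / 2) = n by omega]

theorem exists_irreducible_negCSet_in_Lambda_one_iff (q c w : ℝ) (hq0 : 0 < q) (hq1 : q < 1)
    (hc : c ≤ -2) (hw0 : 0 < w) (hw1 : w ≤ 1) (hwc : tau w = -c) :
    (∃ Z : Set ℝ, IsIrreducibleCSet q c Z ∧ Z ⊆ {y | ∃ n : ℤ, y = q ^ n}) ↔
      (q < w ∨ ∃ n : ℕ, w = q ^ n) := by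
  constructor
  · rintro ⟨Z, hZ, hsub⟩
    by_contra! h
    exact not_isCSet_of_le hq0 hq1 hw0 hw1 hwc h.1 h.2 hZ.1 hsub
  · rintro (h | ⟨n, hn⟩)
    · exact exists_irreducible_of_lt hq0 hq1 hw0 hw1 hwc h
    · exact exists_irreducible_of_eq_pow hq0 hq1 hw0 hw1 hwc hn
end
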